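/- At the right endpoint x = b the series ∑_{n=0}^∞ c_n y_n(b) converges, and its sum f̄(b) equals f(b) if sin β ≠ 0, while f̄(b) = 0 if sin β = 0 (the Dirichlet case y(b) = 0). -/

import Mathlib

/-- `(lam, y)` is an eigenpair of the Sturm–Liouville problem
`-y'' + q y = lam y` on `[a,b]` with separated boundary conditions
`y(a) cos α + y'(a) sin α = 0`, `y(b) cos β + y'(b) sin β = 0`. -/
def IsSLEigenpair (a b : ℝ) (q : ℝ → ℝ) (α β : ℝ) (lam : ℝ) (y : ℝ → ℝ) : Prop :=
  ∃ y' y'' : ℝ → ℝ,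
    (∀ x ∈ Set.Icc a b, HasDerivWithinAt y (y' x) (Set.Icc a b) x) ∧
    (∀ x ∈ Set.Icc a b, HasDerivWithinAt y' (y'' x) (Set.Icc a b) x) ∧
    ContinuousOn y'' (Set.Icc a b) ∧
    (∃ x ∈ Set.Icc a b, y x ≠ 0) ∧
    (∀ x ∈ Set.Icc a b, -(y'' x) + q x * y x = lam * y x) ∧
    y a * Real.cos α + y' a * Real.sin α = 0 ∧
    y b * Real.cos β + y' b * Real.sin β = 0

namespace SLTauber
open Filter Topology

variable {b k : ℕ → ℝ} {C c : ℝ}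

lemma k_lower (hk0 : c ≤ k 0) (hgap : ∀ j, k j + c ≤ k (j+1)) (j : ℕ) :
    c * (j + 1) ≤ k j := by
  induction j with
  | zero => simpa using hk0
  | succ n ih => push_cast; linarith [hgap n]

lemma k_ge (hc : 0 < c) (hk0 : c ≤ k 0) (hgap : ∀ j, k j + c ≤ k (j+1)) (j : ℕ) :
    c ≤ k j := by
  have := k_lower hk0 hgap j
  nlinarith [(Nat.cast_nonneg j : (0:ℝ) ≤ j)]

lemma k_pos (hc : 0 < c) (hk0 : c ≤ k 0) (hgap : ∀ j, k j + c ≤ k (j+1)) (j : ℕ) :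
    0 < k j := lt_of_lt_of_le hc (k_ge hc hk0 hgap j)

lemma arctan_step {u v : ℝ} (hu : 0 ≤ u) (huv : u ≤ v) :
    (v - u) / (1 + v^2) ≤ Real.arctan v - Real.arctan u := by
  have h := (convex_Icc u v).mul_sub_le_image_sub_of_le_deriv (f := Real.arctan)
    (C := 1 / (1 + v^2)) Real.continuous_arctan.continuousOn
    Real.differentiable_arctan.differentiableOn (by
      intro x hx
      rw [interior_Icc] at hx
      simp only [Real.deriv_arctan]
      apply one_div_le_one_div_of_le (by positivity)
      nlinarith [hx.1, hx.2]) u (by simp [huv]) v (by simp [huv]) huv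
  calc _ = 1 / (1 + v^2) * (v - u) := by ring
    _ ≤ _ := h

lemma sum_weight_le (hc : 0 < c) (hk0 : c ≤ k 0) (hgap : ∀ j, k j + c ≤ k (j+1))
    {κ : ℝ} (hκ : 0 < κ) (N : ℕ) :
    ∑ j ∈ Finset.range (N+1), κ / (k j ^ 2 + κ ^ 2) ≤ Real.arctan (k N / κ) / c := by
  have key : ∀ u v : ℝ, 0 ≤ u → u + c ≤ v →
      κ / (v ^ 2 + κ ^ 2) ≤ (Real.arctan (v / κ) - Real.arctan (u / κ)) / c := by
    intro u v hu huv
    rw [le_div_iff₀ hc]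
    have h1 := arctan_step (u := u / κ) (v := v / κ) (by positivity)
      (by gcongr; linarith)
    refine le_trans ?_ h1
    have e : (v / κ - u / κ) / (1 + (v / κ) ^ 2) = κ * (v - u) / (v ^ 2 + κ ^ 2) := by
      field_simp; ring
    rw [e, div_mul_eq_mul_div]
    gcongr
    linarith
  induction N with
  | zero =>
    simpa using key 0 (k 0) le_rfl (by linarith)
  | succ n ih =>
    rw [Finset.sum_range_succ]
    have := key (k n) (k (n+1)) (k_pos hc hk0 hgap n).le (hgap n)
    rw [sub_div] at this
    linarith

lemma sum_weight_le' (hc : 0 < c) (hk0 : c ≤ k 0) (hgap : ∀ j, k j + c ≤ k (j+1))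
    {κ : ℝ} (hκ : 0 < κ) (N : ℕ) :
    ∑ j ∈ Finset.range N, κ / (k j ^ 2 + κ ^ 2) ≤ 2 / c := by
  calc _ ≤ ∑ j ∈ Finset.range (N+1), κ / (k j ^ 2 + κ ^ 2) := by
        rw [Finset.sum_range_succ]
        have : 0 ≤ κ / (k N ^ 2 + κ ^ 2) := by positivity
        linarith
    _ ≤ _ := sum_weight_le hc hk0 hgap hκ N
    _ ≤ _ := by
        gcongr
        linarith [Real.arctan_lt_pi_div_two (k N / κ), Real.pi_le_four]

lemma summable_weight (hc : 0 < c) (hk0 : c ≤ k 0) (hgap : ∀ j, k j + c ≤ k (j+1))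
    {κ : ℝ} (hκ : 0 < κ) : Summable fun j => κ / (k j ^ 2 + κ ^ 2) :=
  summable_of_sum_range_le (fun _ => by positivity) (sum_weight_le' hc hk0 hgap hκ)

lemma tsum_weight_le (hc : 0 < c) (hk0 : c ≤ k 0) (hgap : ∀ j, k j + c ≤ k (j+1))
    {κ : ℝ} (hκ : 0 < κ) : ∑' j, κ / (k j ^ 2 + κ ^ 2) ≤ 2 / c :=
  Real.tsum_le_of_sum_range_le (fun _ => by positivity) (sum_weight_le' hc hk0 hgap hκ)

/-- the variable `x_j(κ)` -/
noncomputable def X (k : ℕ → ℝ) (κ : ℝ) (j : ℕ) : ℝ := κ^2 / (k j ^ 2 + κ ^ 2)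

lemma X_mem (κ : ℝ) (j : ℕ) : X k κ j ∈ Set.Icc (0:ℝ) 1 := by
  refine ⟨by unfold X; positivity, ?_⟩
  unfold X
  apply div_le_one_of_le₀ <;> nlinarith [sq_nonneg (k j), sq_nonneg κ]

/-- the weights `b_j x_j (1-x_j)` -/
noncomputable def Wt (b k : ℕ → ℝ) (κ : ℝ) (j : ℕ) : ℝ := b j * (X k κ j * (1 - X k κ j))

lemma Wt_le (hc : 0 < c) (hk0 : c ≤ k 0) (hgap : ∀ j, k j + c ≤ k (j+1))
    (hb : ∀ j, |b j| ≤ C / k j) {κ : ℝ} (hκ : 0 < κ) (j : ℕ) :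
    |Wt b k κ j| ≤ C * (κ / (k j ^ 2 + κ ^ 2)) := by
  have hk := k_pos hc hk0 hgap j
  have hX := X_mem (k := k) κ j
  have hC : 0 ≤ C := by
    have := (abs_nonneg _).trans (hb j)
    by_contra h
    have : C / k j < 0 := div_neg_of_neg_of_pos (by linarith) hk
    linarith
  unfold Wt
  rw [abs_mul, abs_of_nonneg (mul_nonneg hX.1 (by linarith [hX.2]))]
  have hpos : 0 < k j ^ 2 + κ ^ 2 := by positivity
  calc _ ≤ C / k j * (X k κ j * (1 - X k κ j)) := by
        gcongr
        · exact mul_nonneg hX.1 (by linarith [hX.2])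
        · exact hb j
    _ = C * (k j * κ / (k j ^ 2 + κ ^ 2) * (κ / (k j ^ 2 + κ ^ 2))) := by
        unfold X; field_simp; ring
    _ ≤ C * (1 * (κ / (k j ^ 2 + κ ^ 2))) := by
        gcongr
        rw [div_le_one hpos]
        nlinarith [sq_nonneg (k j - κ), mul_pos hk hκ]
    _ = _ := by ring

lemma C_nonneg (hc : 0 < c) (hk0 : c ≤ k 0) (hb : ∀ j, |b j| ≤ C / k j) : 0 ≤ C := by
  have := (abs_nonneg _).trans (hb 0)
  by_contra h
  have : C / k 0 < 0 := div_neg_of_neg_of_pos (by linarith) (by linarith)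
  linarith

lemma summable_Wt_mul (hc : 0 < c) (hk0 : c ≤ k 0) (hgap : ∀ j, k j + c ≤ k (j+1))
    (hb : ∀ j, |b j| ≤ C / k j) {κ : ℝ} (hκ : 0 < κ) {h : ℝ → ℝ} {M : ℝ}
    (hM : ∀ x ∈ Set.Icc (0:ℝ) 1, |h x| ≤ M) :
    Summable fun j => Wt b k κ j * h (X k κ j) := by
  refine Summable.of_norm_bounded (((summable_weight hc hk0 hgap hκ).mul_left C).mul_right M) ?_
  intro j
  rw [Real.norm_eq_abs, abs_mul]
  have := hM _ (X_mem (k := k) κ j)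
  have h2 := Wt_le hc hk0 hgap hb hκ j
  exact mul_le_mul h2 this (abs_nonneg _) ((abs_nonneg _).trans h2)

lemma abs_tsum_Wt_mul_le (hc : 0 < c) (hk0 : c ≤ k 0) (hgap : ∀ j, k j + c ≤ k (j+1))
    (hb : ∀ j, |b j| ≤ C / k j) {κ : ℝ} (hκ : 0 < κ) {h : ℝ → ℝ} {M : ℝ}
    (hM : ∀ x ∈ Set.Icc (0:ℝ) 1, |h x| ≤ M) :
    |∑' j, Wt b k κ j * h (X k κ j)| ≤ C * (2 / c) * M := by
  have hM0 : 0 ≤ M := (abs_nonneg _).trans (hM 0 (by simp))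
  have hC := C_nonneg hc hk0 hb
  have hs := ((summable_weight hc hk0 hgap hκ).mul_left C).mul_right M
  have : ‖∑' j, Wt b k κ j * h (X k κ j)‖ ≤ ∑' j, C * (κ / (k j ^ 2 + κ ^ 2)) * M := by
    refine tsum_of_norm_bounded hs.hasSum ?_
    intro j
    rw [Real.norm_eq_abs, abs_mul]
    have h2 := Wt_le hc hk0 hgap hb hκ j
    exact mul_le_mul h2 (hM _ (X_mem (k := k) κ j)) (abs_nonneg _) ((abs_nonneg _).trans h2)
  rw [Real.norm_eq_abs] at this
  refine this.trans ?_
  rw [tsum_mul_right, tsum_mul_left]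
  gcongr
  exact tsum_weight_le hc hk0 hgap hκ

/-- `h` is good if the weighted sums tend to zero. -/
def Good (b k : ℕ → ℝ) (h : ℝ → ℝ) : Prop :=
  Tendsto (fun κ => ∑' j, Wt b k κ j * h (X k κ j)) atTop (𝓝 0)

lemma Good.sub (hc : 0 < c) (hk0 : c ≤ k 0) (hgap : ∀ j, k j + c ≤ k (j+1))
    (hb : ∀ j, |b j| ≤ C / k j) {h g : ℝ → ℝ} {M M' : ℝ}
    (hM : ∀ x ∈ Set.Icc (0:ℝ) 1, |h x| ≤ M) (hM' : ∀ x ∈ Set.Icc (0:ℝ) 1, |g x| ≤ M')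
    (gh : Good b k h) (gg : Good b k g) : Good b k (fun x => h x - g x) := by
  have := Tendsto.sub gh gg
  rw [sub_zero] at this
  refine this.congr' ?_
  filter_upwards [eventually_gt_atTop 0] with κ hκ
  rw [← (summable_Wt_mul hc hk0 hgap hb hκ hM).tsum_sub (summable_Wt_mul hc hk0 hgap hb hκ hM')]
  congr 1; ext j; ring

lemma Good.add (hc : 0 < c) (hk0 : c ≤ k 0) (hgap : ∀ j, k j + c ≤ k (j+1))
    (hb : ∀ j, |b j| ≤ C / k j) {h g : ℝ → ℝ} {M M' : ℝ}
    (hM : ∀ x ∈ Set.Icc (0:ℝ) 1, |h x| ≤ M) (hM' : ∀ x ∈ Set.Icc (0:ℝ) 1, |g x| ≤ M')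
    (gh : Good b k h) (gg : Good b k g) : Good b k (fun x => h x + g x) := by
  have := Tendsto.add gh gg
  rw [add_zero] at this
  refine this.congr' ?_
  filter_upwards [eventually_gt_atTop 0] with κ hκ
  rw [← (summable_Wt_mul hc hk0 hgap hb hκ hM).tsum_add (summable_Wt_mul hc hk0 hgap hb hκ hM')]
  congr 1; ext j; ring

lemma Good.const_mul {h : ℝ → ℝ} (r : ℝ) (gh : Good b k h) : Good b k (fun x => r * h x) := by
  have := Tendsto.const_mul r gh
  rw [mul_zero] at this
  refine this.congr ?_
  intro κ
  rw [← tsum_mul_left]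
  congr 1; ext j; ring

lemma Good.congr_on {h g : ℝ → ℝ} (gh : Good b k h) (e : ∀ x ∈ Set.Icc (0:ℝ) 1, h x = g x) :
    Good b k g := by
  refine Tendsto.congr ?_ gh
  intro κ
  congr 1; ext j; rw [e _ (X_mem κ j)]

lemma Good.of_approx (hc : 0 < c) (hk0 : c ≤ k 0) (hgap : ∀ j, k j + c ≤ k (j+1))
    (hb : ∀ j, |b j| ≤ C / k j) {h : ℝ → ℝ} {M : ℝ}
    (hM : ∀ x ∈ Set.Icc (0:ℝ) 1, |h x| ≤ M)
    (happ : ∀ ε > 0, ∃ g : ℝ → ℝ, Good b k g ∧ ∀ x ∈ Set.Icc (0:ℝ) 1, |h x - g x| ≤ ε) :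
    Good b k h := by
  have hC := C_nonneg hc hk0 hb
  unfold Good
  rw [Metric.tendsto_atTop']
  intro ε hε
  obtain ⟨g, gg, hg⟩ := happ (ε / 2 / (C * (2 / c) + 1)) (by positivity)
  have hgM : ∀ x ∈ Set.Icc (0:ℝ) 1, |g x| ≤ M + ε / 2 / (C * (2 / c) + 1) := by
    intro x hx
    have h1 := abs_le.1 (hM x hx)
    have h2 := abs_le.1 (hg x hx)
    rw [abs_le]; constructor <;> linarith
  obtain ⟨K, hK⟩ := (Metric.tendsto_atTop'.1 gg) (ε / 2) (by positivity)
  refine ⟨max K 0, fun κ hκ => ?_⟩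
  have hκ0 : 0 < κ := lt_of_le_of_lt (le_max_right _ _) hκ
  have h1 := hK κ (lt_of_le_of_lt (le_max_left _ _) hκ)
  rw [Real.dist_eq, sub_zero] at h1 ⊢
  have h2 := abs_tsum_Wt_mul_le hc hk0 hgap hb hκ0 hg
  have e : ∑' j, Wt b k κ j * (h (X k κ j) - g (X k κ j)) =
     ∑' j, Wt b k κ j * h (X k κ j) - ∑' j, Wt b k κ j * g (X k κ j) := by
    rw [← (summable_Wt_mul hc hk0 hgap hb hκ0 hM).tsum_sub
      (summable_Wt_mul hc hk0 hgap hb hκ0 hgM)]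
    congr 1; ext j; ring
  rw [e] at h2
  have h3 : C * (2 / c) * (ε / 2 / (C * (2 / c) + 1)) ≤ ε / 2 := by
    rw [mul_div_assoc', div_le_iff₀ (by positivity)]
    nlinarith
  have h4 := abs_add_le (∑' j, Wt b k κ j * h (X k κ j) - ∑' j, Wt b k κ j * g (X k κ j))
    (∑' j, Wt b k κ j * g (X k κ j))
  rw [sub_add_cancel] at h4
  linarith

lemma summable_bX (hc : 0 < c) (hk0 : c ≤ k 0) (hgap : ∀ j, k j + c ≤ k (j+1))
    (hb : ∀ j, |b j| ≤ C / k j) {κ : ℝ} (hκ : 0 < κ) :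
    Summable fun j => b j * X k κ j := by
  have hC := C_nonneg hc hk0 hb
  refine Summable.of_norm_bounded ((summable_weight hc hk0 hgap hκ).mul_left (C / c * κ)) ?_
  intro j
  have hk := k_ge hc hk0 hgap j
  have hX := X_mem (k := k) κ j
  rw [Real.norm_eq_abs, abs_mul, abs_of_nonneg hX.1]
  calc _ ≤ C / c * X k κ j := by
        gcongr
        · exact hX.1
        · exact (hb j).trans (by gcongr)
    _ = _ := by unfold X; ring

lemma good_e (hc : 0 < c) (hk0 : c ≤ k 0) (hgap : ∀ j, k j + c ≤ k (j+1))
    (hb : ∀ j, |b j| ≤ C / k j) {s : ℝ}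
    (hF : Tendsto (fun κ => ∑' j, b j * X k κ j) atTop (𝓝 s)) {d : ℝ} (hd : 0 < d) :
    Good b k (fun x => 1 / (1 + d * x)) := by
  set σ := Real.sqrt (1 + d) with hσ
  have hσ2 : σ ^ 2 = 1 + d := Real.sq_sqrt (by linarith)
  have hσ0 : 0 < σ := Real.sqrt_pos.2 (by linarith)
  have h1 : Tendsto (fun κ => ∑' j, b j * X k (σ * κ) j) atTop (𝓝 s) :=
    hF.comp (tendsto_id.const_mul_atTop hσ0)
  have h2 := (h1.sub hF).const_mul (1 / d)
  rw [sub_self, mul_zero] at h2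
  refine h2.congr' ?_
  filter_upwards [eventually_gt_atTop 0] with κ hκ
  rw [← (summable_bX hc hk0 hgap hb (mul_pos hσ0 hκ)).tsum_sub (summable_bX hc hk0 hgap hb hκ),
    ← tsum_mul_left]
  congr 1; ext j
  have hk := k_pos hc hk0 hgap j
  unfold Wt X
  rw [mul_pow, hσ2]
  have h3 : k j ^ 2 + κ ^ 2 ≠ 0 := by positivity
  have h4 : k j ^ 2 + (1 + d) * κ ^ 2 ≠ 0 := by positivity
  have h5 : k j ^ 2 + κ ^ 2 + d * κ ^ 2 ≠ 0 := by positivity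
  have h6 : 1 + d * (κ ^ 2 / (k j ^ 2 + κ ^ 2)) ≠ 0 := by positivity
  field_simp
  ring

lemma good_pow (hc : 0 < c) (hk0 : c ≤ k 0) (hgap : ∀ j, k j + c ≤ k (j+1))
    (hb : ∀ j, |b j| ≤ C / k j) {s : ℝ}
    (hF : Tendsto (fun κ => ∑' j, b j * X k κ j) atTop (𝓝 s)) (m : ℕ) :
    (∀ d > 0, Good b k (fun x => x ^ m / (1 + d * x))) ∧ Good b k (fun x => x ^ m) := by
  have bd1 : ∀ m : ℕ, ∀ x ∈ Set.Icc (0:ℝ) 1, |x ^ m| ≤ 1 := by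
    intro m x hx
    rw [abs_of_nonneg (pow_nonneg hx.1 _)]
    exact pow_le_one₀ hx.1 hx.2
  have bd2 : ∀ m : ℕ, ∀ d > 0, ∀ x ∈ Set.Icc (0:ℝ) 1, |x ^ m / (1 + d * x)| ≤ 1 := by
    intro m d hd x hx
    have h0 : 0 ≤ d * x := mul_nonneg hd.le hx.1
    have h1 := bd1 m x hx
    rw [abs_div, abs_of_pos (show 0 < 1 + d * x by linarith), div_le_one (by linarith)]
    linarith
  have lim : ∀ m : ℕ, (∀ d > 0, Good b k (fun x => x ^ m / (1 + d * x))) →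
      Good b k (fun x => x ^ m) := by
    intro m hm
    refine Good.of_approx hc hk0 hgap hb (bd1 m) ?_
    intro ε hε
    refine ⟨_, hm ε hε, ?_⟩
    intro x hx
    have h0 : 0 ≤ ε * x := mul_nonneg hε.le hx.1
    have e : x ^ m - x ^ m / (1 + ε * x) = (x ^ (m+1) / (1 + ε * x)) * ε := by
      field_simp; ring
    rw [e, abs_mul, abs_of_pos hε]
    have := bd2 (m+1) ε hε x hx
    nlinarith
  induction m with
  | zero =>
    have : ∀ d > 0, Good b k (fun x => x ^ 0 / (1 + d * x)) := by
      intro d hd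
      simpa using good_e hc hk0 hgap hb hF hd
    exact ⟨this, lim 0 this⟩
  | succ m ih =>
    have : ∀ d > 0, Good b k (fun x => x ^ (m+1) / (1 + d * x)) := by
      intro d hd
      have h1 := (Good.sub hc hk0 hgap hb (bd1 m) (bd2 m d hd) ih.2 (ih.1 d hd)).const_mul (1/d)
      refine h1.congr_on ?_
      intro x hx
      have h0 : 0 ≤ d * x := mul_nonneg hd.le hx.1
      field_simp; ring
    exact ⟨this, lim _ this⟩

lemma good_continuous (hc : 0 < c) (hk0 : c ≤ k 0) (hgap : ∀ j, k j + c ≤ k (j+1))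
    (hb : ∀ j, |b j| ≤ C / k j) {s : ℝ}
    (hF : Tendsto (fun κ => ∑' j, b j * X k κ j) atTop (𝓝 s)) {h : ℝ → ℝ}
    (hh : ContinuousOn h (Set.Icc 0 1)) : Good b k h := by
  have hpoly : ∀ p : Polynomial ℝ, Good b k (fun x => p.eval x) := by
    intro p
    induction p using Polynomial.induction_on' with
    | add p q hp hq =>
      obtain ⟨M, hM⟩ := isCompact_Icc.exists_bound_of_continuousOn
        (p.continuous.continuousOn (s := Set.Icc (0:ℝ) 1))
      obtain ⟨M', hM'⟩ := isCompact_Icc.exists_bound_of_continuousOn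
        (q.continuous.continuousOn (s := Set.Icc (0:ℝ) 1))
      simp only [Polynomial.eval_add]
      exact Good.add hc hk0 hgap hb hM hM' hp hq
    | monomial n a =>
      simp only [Polynomial.eval_monomial]
      exact (good_pow hc hk0 hgap hb hF n).2.const_mul a
  obtain ⟨M, hM⟩ := isCompact_Icc.exists_bound_of_continuousOn hh
  refine Good.of_approx hc hk0 hgap hb hM ?_
  intro ε hε
  obtain ⟨p, hp⟩ := exists_polynomial_near_of_continuousOn 0 1 h hh ε hε
  refine ⟨_, hpoly p, fun x hx => ?_⟩
  rw [abs_sub_comm]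
  exact (hp x hx).le

/-- the ramp -/
noncomputable def ramp (ε x : ℝ) : ℝ := max 0 (min 1 ((x - (1/2 - ε)) / ε))

lemma ramp_mem (ε x : ℝ) : ramp ε x ∈ Set.Icc (0:ℝ) 1 := by
  unfold ramp
  exact ⟨le_max_left _ _, max_le zero_le_one (min_le_left _ _)⟩

lemma ramp_one {ε x : ℝ} (hε : 0 < ε) (hx : 1/2 ≤ x) : ramp ε x = 1 := by
  unfold ramp
  rw [min_eq_left, max_eq_right zero_le_one]
  rw [le_div_iff₀ hε]; linarith

lemma ramp_zero {ε x : ℝ} (hε : 0 < ε) (hx : x ≤ 1/2 - ε) : ramp ε x = 0 := by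
  unfold ramp
  rw [max_eq_left]
  refine (min_le_right _ _).trans ?_
  exact div_nonpos_of_nonpos_of_nonneg (by linarith) hε.le

lemma ramp_continuous (ε : ℝ) : Continuous (ramp ε) := by
  unfold ramp; fun_prop

lemma summable_b_ramp (hc : 0 < c) (hk0 : c ≤ k 0) (hgap : ∀ j, k j + c ≤ k (j+1))
    (hb : ∀ j, |b j| ≤ C / k j) {κ : ℝ} (hκ : 0 < κ) {ε : ℝ} (hε : 0 < ε) (hε' : ε ≤ 1/4) :
    Summable fun j => b j * ramp ε (X k κ j) := by
  refine Summable.of_norm_bounded ((summable_bX hc hk0 hgap hb hκ).norm.mul_left 4) ?_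
  intro j
  have hX := X_mem (k := k) κ j
  have hr := ramp_mem ε (X k κ j)
  rw [norm_mul, norm_mul, Real.norm_eq_abs (ramp _ _), Real.norm_eq_abs (X _ _ _),
    abs_of_nonneg hX.1, abs_of_nonneg hr.1]
  by_cases h : X k κ j ≤ 1/2 - ε
  · rw [ramp_zero hε h, mul_zero]
    have := hX.1
    positivity
  · push Not at h
    have : ramp ε (X k κ j) ≤ 4 * X k κ j := by linarith [hr.2]
    nlinarith [norm_nonneg (b j)]

lemma ramp_tendsto (hc : 0 < c) (hk0 : c ≤ k 0) (hgap : ∀ j, k j + c ≤ k (j+1))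
    (hb : ∀ j, |b j| ≤ C / k j) {s : ℝ}
    (hF : Tendsto (fun κ => ∑' j, b j * X k κ j) atTop (𝓝 s))
    {ε : ℝ} (hε : 0 < ε) (hε' : ε ≤ 1/4) :
    Tendsto (fun κ => ∑' j, b j * ramp ε (X k κ j)) atTop (𝓝 s) := by
  have hg : Good b k
      (fun x => ramp ε x / max x (1/4) - (1 - ramp ε x) / max (1 - x) (1/2)) := by
    refine good_continuous hc hk0 hgap hb hF ?_
    refine Continuous.continuousOn ?_
    refine Continuous.sub ?_ ?_
    · refine (ramp_continuous ε).div (by fun_prop) (fun x => ?_)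
      have := le_max_right x (1/4); linarith
    · refine (continuous_const.sub (ramp_continuous ε)).div (by fun_prop) (fun x => ?_)
      have := le_max_right (1 - x) (1/2); linarith
  have h2 := hF.add hg
  rw [add_zero] at h2
  refine h2.congr' ?_
  filter_upwards [eventually_gt_atTop 0] with κ hκ
  have e : ∀ j, Wt b k κ j * (ramp ε (X k κ j) / max (X k κ j) (1/4)
      - (1 - ramp ε (X k κ j)) / max (1 - X k κ j) (1/2)) =
      b j * ramp ε (X k κ j) - b j * X k κ j := by
    intro j
    have hX := X_mem (k := k) κ j
    have e1 : ramp ε (X k κ j) / max (X k κ j) (1/4) * X k κ j = ramp ε (X k κ j) := by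
      by_cases h : X k κ j ≤ 1/2 - ε
      · rw [ramp_zero hε h]; simp
      · push Not at h
        rw [max_eq_left (by linarith)]
        exact div_mul_cancel₀ _ (by linarith)
    have e2 : (1 - ramp ε (X k κ j)) / max (1 - X k κ j) (1/2) * (1 - X k κ j)
        = 1 - ramp ε (X k κ j) := by
      by_cases h : 1/2 ≤ X k κ j
      · rw [ramp_one hε h]; simp
      · push Not at h
        rw [max_eq_left (by linarith)]
        exact div_mul_cancel₀ _ (by linarith)
    unfold Wt
    calc _ = b j * ((ramp ε (X k κ j) / max (X k κ j) (1/4) * X k κ j) * (1 - X k κ j)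
        - ((1 - ramp ε (X k κ j)) / max (1 - X k κ j) (1/2) * (1 - X k κ j)) * X k κ j) := by
          ring
      _ = _ := by rw [e1, e2]; ring
  rw [tsum_congr e, (summable_b_ramp hc hk0 hgap hb hκ hε hε').tsum_sub
    (summable_bX hc hk0 hgap hb hκ)]
  ring

lemma k_mono (hc : 0 < c) (hgap : ∀ j, k j + c ≤ k (j+1)) : StrictMono k :=
  strictMono_nat_of_lt_succ fun n => by linarith [hgap n]

lemma k_diff (hgap : ∀ j, k j + c ≤ k (j+1)) (N i : ℕ) : k N + c * i ≤ k (N + i) := by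
  induction i with
  | zero => simp
  | succ n ih => push_cast; rw [← add_assoc]; linarith [hgap (N+n)]

/-- the window estimate -/
lemma window (hc : 0 < c) (hk0 : c ≤ k 0) (hgap : ∀ j, k j + c ≤ k (j+1))
    (hb : ∀ j, |b j| ≤ C / k j) {ε : ℝ} (hε : 0 < ε) (hε' : ε ≤ 1/4) (N : ℕ) :
    |∑' j, b j * ramp ε (X k (k N) j) - ∑ j ∈ Finset.range (N+1), b j| ≤ 8 * C / c * ε := by
  have hC := C_nonneg hc hk0 hb
  have hκ := k_pos hc hk0 hgap N
  have hmono := k_mono hc hgap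
  have hs := summable_b_ramp hc hk0 hgap hb hκ hε hε'
  rw [← hs.sum_add_tsum_nat_add (N+1)]
  have e1 : ∑ j ∈ Finset.range (N+1), b j * ramp ε (X k (k N) j)
      = ∑ j ∈ Finset.range (N+1), b j := by
    refine Finset.sum_congr rfl ?_
    intro j hj
    have hj' : j ≤ N := by simpa [Nat.lt_succ_iff] using hj
    have hkj := hmono.monotone hj'
    have hkp := k_pos hc hk0 hgap j
    rw [ramp_one hε, mul_one]
    unfold X
    rw [div_le_div_iff₀ (by norm_num) (by positivity)]
    nlinarith
  rw [e1, add_sub_cancel_left]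
  set n0 := ⌊8 * ε * k N / c⌋₊ with hn0
  have hz : ∀ j ∉ Finset.range n0, b (j + (N+1)) * ramp ε (X k (k N) (j + (N+1))) = 0 := by
    intro j hj
    have hj' : n0 ≤ j := by simpa using hj
    have h1 : 8 * ε * k N / c < j + 1 := by
      refine (Nat.lt_floor_add_one _).trans_le ?_
      have : (n0 : ℝ) ≤ j := by exact_mod_cast hj'
      linarith
    have h2 := k_diff hgap N (j+1)
    have e : N + (j+1) = j + (N+1) := by ring
    rw [e] at h2
    push_cast at h2
    rw [div_lt_iff₀ hc] at h1
    have h3 : k N * (1 + 8 * ε) ≤ k (j + (N+1)) := by nlinarith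
    rw [ramp_zero hε, mul_zero]
    have hkp := k_pos hc hk0 hgap (j + (N+1))
    unfold X
    rw [div_le_iff₀ (by positivity)]
    have h4 : (k N * (1 + 8 * ε))^2 ≤ k (j + (N+1)) ^ 2 := by
      gcongr
    have h5 : (0:ℝ) ≤ 1/2 - ε := by linarith
    have h6 : (1/2 - ε) * (k N * (1 + 8 * ε))^2 ≤ (1/2 - ε) * k (j + (N+1)) ^ 2 := by
      gcongr
    have h7 : (1:ℝ) ≤ (1/2 - ε) * ((1 + 8 * ε)^2 + 1) := by nlinarith [mul_nonneg (sq_nonneg ε) (sub_nonneg.2 hε')]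
    nlinarith [sq_nonneg (k N)]
  rw [tsum_eq_sum hz]
  refine (Finset.abs_sum_le_sum_abs _ _).trans ?_
  have : ∀ j ∈ Finset.range n0, |b (j + (N+1)) * ramp ε (X k (k N) (j + (N+1)))| ≤ C / k N := by
    intro j _
    have hr := ramp_mem ε (X k (k N) (j + (N+1)))
    rw [abs_mul, abs_of_nonneg hr.1]
    have h1 : |b (j + (N+1))| ≤ C / k N :=
      (hb _).trans (by gcongr; exact hmono.monotone (by omega))
    nlinarith [abs_nonneg (b (j + (N+1))), hr.1, hr.2]
  refine (Finset.sum_le_card_nsmul _ _ _ this).trans ?_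
  rw [Finset.card_range, nsmul_eq_mul]
  have h1 : (n0 : ℝ) ≤ 8 * ε * k N / c := Nat.floor_le (by positivity)
  calc (n0 : ℝ) * (C / k N) ≤ 8 * ε * k N / c * (C / k N) := by gcongr
    _ = _ := by field_simp

theorem tauber (hc : 0 < c) (hk0 : c ≤ k 0) (hgap : ∀ j, k j + c ≤ k (j+1))
    (hb : ∀ j, |b j| ≤ C / k j) {s : ℝ}
    (hF : Tendsto (fun κ => ∑' j, b j * (κ ^ 2 / (k j ^ 2 + κ ^ 2))) atTop (𝓝 s)) :
    Tendsto (fun N => ∑ j ∈ Finset.range N, b j) atTop (𝓝 s) := by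
  have hC := C_nonneg hc hk0 hb
  rw [← tendsto_add_atTop_iff_nat 1]
  have hk : Tendsto k atTop atTop := by
    refine tendsto_atTop_mono (k_lower hk0 hgap) ?_
    exact (tendsto_natCast_atTop_atTop.atTop_add tendsto_const_nhds).const_mul_atTop hc
  rw [Metric.tendsto_atTop]
  intro δ hδ
  set ε := min (1/4) (δ / 2 / (8 * C / c + 1)) with hεd
  have hε : 0 < ε := by rw [hεd]; positivity
  have hε' : ε ≤ 1/4 := min_le_left _ _
  have h1 := (ramp_tendsto hc hk0 hgap hb hF hε hε').comp hk
  obtain ⟨N0, hN0⟩ := (Metric.tendsto_atTop.1 h1) (δ/2) (by positivity)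
  refine ⟨N0, fun N hN => ?_⟩
  have h2 := hN0 N hN
  have h3 := window hc hk0 hgap hb hε hε' N
  have h4 : 8 * C / c * ε ≤ δ / 2 := by
    have : ε ≤ δ / 2 / (8 * C / c + 1) := min_le_right _ _
    rw [le_div_iff₀ (by positivity)] at this
    nlinarith
  rw [Real.dist_eq] at h2 ⊢
  simp only [Function.comp_apply] at h2
  rw [abs_lt] at *
  rw [abs_le] at h3
  constructor <;> linarith [h2.1, h2.2, h3.1, h3.2]

end SLTauber

namespace SLOde
open Set MeasureTheory

lemma monoOn_of {a b : ℝ} {F F' : ℝ → ℝ}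
    (hF : ∀ x ∈ Icc a b, HasDerivWithinAt F (F' x) (Icc a b) x)
    (h0 : ∀ x ∈ Icc a b, 0 ≤ F' x) : MonotoneOn F (Icc a b) := by
  have hd : ∀ x ∈ interior (Icc a b), HasDerivAt F (F' x) x := by
    intro x hx
    exact (hF x (interior_subset hx)).hasDerivAt (mem_interior_iff_mem_nhds.1 hx)
  refine monotoneOn_of_deriv_nonneg (convex_Icc a b)
    (fun x hx => (hF x hx).continuousWithinAt)
    (fun x hx => (hd x hx).differentiableAt.differentiableWithinAt) ?_
  intro x hx
  rw [(hd x hx).deriv]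
  exact h0 x (interior_subset hx)

lemma ftc {a b : ℝ} (hab : a ≤ b) {F F' : ℝ → ℝ}
    (hF : ∀ x ∈ Icc a b, HasDerivWithinAt F (F' x) (Icc a b) x)
    (hc : ContinuousOn F' (Icc a b)) : ∫ x in a..b, F' x = F b - F a := by
  refine intervalIntegral.integral_eq_sub_of_hasDerivAt_of_le hab
    (fun x hx => (hF x hx).continuousWithinAt) ?_
    (hc.intervalIntegrable_of_Icc hab)
  intro x hx
  exact (hF x (Ioo_subset_Icc_self hx)).hasDerivAt (Icc_mem_nhds hx.1 hx.2)

/-- Gronwall type comparison. -/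
lemma gron {a b : ℝ} {E E' : ℝ → ℝ} {M : ℝ} (hM : 0 ≤ M)
    (hE : ∀ x ∈ Icc a b, HasDerivWithinAt E (E' x) (Icc a b) x)
    (hE0 : ∀ x ∈ Icc a b, 0 ≤ E x)
    (h : ∀ x ∈ Icc a b, |E' x| ≤ M * E x) {x t : ℝ} (hx : x ∈ Icc a b) (ht : t ∈ Icc a b) :
    E x ≤ Real.exp (M * (b - a)) * E t := by
  have key : ∀ s : ℝ, |s| = M → ∀ x ∈ Icc a b,
      HasDerivWithinAt (fun x => E x * Real.exp (s * x))
        ((E' x + s * E x) * Real.exp (s * x)) (Icc a b) x := by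
    intro s _ x hx
    have h1 : HasDerivWithinAt (fun x => Real.exp (s * x)) (Real.exp (s * x) * s) (Icc a b) x := by
      have : HasDerivAt (fun x => s * x) s x := by simpa using (hasDerivAt_id x).const_mul s
      exact this.exp.hasDerivWithinAt
    refine ((hE x hx).mul h1).congr_deriv ?_
    ring
  rcases le_total x t with hxt | hxt
  · have hm := monoOn_of (key M (abs_of_nonneg hM)) (by
      intro x hx
      have := abs_le.1 (h x hx)
      exact mul_nonneg (by linarith) (Real.exp_pos _).le) hx ht hxt
    simp only at hm
    have e : E x = E x * Real.exp (M * x) * Real.exp (-(M * x)) := by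
      rw [mul_assoc, ← Real.exp_add]; simp
    rw [e]
    calc _ ≤ E t * Real.exp (M * t) * Real.exp (-(M * x)) := by gcongr
      _ = Real.exp (M * (t - x)) * E t := by
        rw [mul_assoc, ← Real.exp_add, mul_comm]; ring_nf
      _ ≤ _ := by
        have := hE0 t ht
        gcongr
        · exact ht.2
        · exact hx.1
  · have hm := monoOn_of (F := fun x => -(E x * Real.exp (-M * x)))
      (fun x hx => (key (-M) (by rw [abs_neg, abs_of_nonneg hM]) x hx).neg) (by
      intro x hx
      have := abs_le.1 (h x hx)
      have h2 := mul_nonneg (show 0 ≤ -(E' x + -M * E x) by linarith) (Real.exp_pos (-M * x)).le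
      linarith) ht hx hxt
    simp only at hm
    have e : E x = E x * Real.exp (-M * x) * Real.exp (M * x) := by
      rw [mul_assoc, ← Real.exp_add]; simp
    rw [e]
    calc _ ≤ E t * Real.exp (-M * t) * Real.exp (M * x) := by gcongr ?_ * _; linarith
      _ = Real.exp (M * (x - t)) * E t := by
        rw [mul_assoc, ← Real.exp_add, mul_comm]; ring_nf
      _ ≤ _ := by
        have := hE0 t ht
        gcongr
        · exact hx.2
        · exact ht.1

lemma bc_wronskian {c s u u' v v' : ℝ} (hcs : c ^ 2 + s ^ 2 = 1)
    (hu : u * c + u' * s = 0) (hv : v * c + v' * s = 0) : u * v' - u' * v = 0 := by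
  have h1 : c * (u * v' - u' * v) = 0 := by linear_combination v' * hu - u' * hv
  have h2 : s * (u * v' - u' * v) = 0 := by linear_combination -v * hu + u * hv
  linear_combination (-(u * v' - u' * v)) * hcs + c * h1 + s * h2

lemma lagrange {a b : ℝ} (hab : a ≤ b) {u u1 u2 v v1 v2 : ℝ → ℝ} {α β : ℝ}
    (hu : ∀ x ∈ Icc a b, HasDerivWithinAt u (u1 x) (Icc a b) x)
    (hu1 : ∀ x ∈ Icc a b, HasDerivWithinAt u1 (u2 x) (Icc a b) x)
    (hv : ∀ x ∈ Icc a b, HasDerivWithinAt v (v1 x) (Icc a b) x)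
    (hv1 : ∀ x ∈ Icc a b, HasDerivWithinAt v1 (v2 x) (Icc a b) x)
    (hu2 : ContinuousOn u2 (Icc a b)) (hv2 : ContinuousOn v2 (Icc a b))
    (hua : u a * Real.cos α + u1 a * Real.sin α = 0)
    (hva : v a * Real.cos α + v1 a * Real.sin α = 0)
    (hub : u b * Real.cos β + u1 b * Real.sin β = 0)
    (hvb : v b * Real.cos β + v1 b * Real.sin β = 0) :
    ∫ x in a..b, (u x * v2 x - u2 x * v x) = 0 := by
  rw [ftc hab (F := fun x => u x * v1 x - u1 x * v x)]
  · rw [bc_wronskian (Real.cos_sq_add_sin_sq _) hua hva,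
      bc_wronskian (Real.cos_sq_add_sin_sq _) hub hvb, sub_zero]
  · intro x hx
    refine (((hu x hx).mul (hv1 x hx)).sub ((hu1 x hx).mul (hv x hx))).congr_deriv ?_
    ring
  · have cu : ContinuousOn u (Icc a b) := fun x hx => (hu x hx).continuousWithinAt
    have cv : ContinuousOn v (Icc a b) := fun x hx => (hv x hx).continuousWithinAt
    exact (cu.mul hv2).sub (hu2.mul cv)

/-- bounded variation estimate -/
lemma bv_bound {a b : ℝ} (hab : a < b) {f g g' : ℝ → ℝ} (hf : ContinuousOn f (Icc a b))
    (hbv : BoundedVariationOn f (Icc a b))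
    (hg : ∀ x ∈ Icc a b, HasDerivWithinAt g (g' x) (Icc a b) x)
    (hg' : ContinuousOn g' (Icc a b)) {M F : ℝ} (hM : ∀ x ∈ Icc a b, |g x| ≤ M)
    (hF : ∀ x ∈ Icc a b, |f x| ≤ F) :
    |∫ x in a..b, g' x * f x| ≤ M * (2 * F + (eVariationOn f (Icc a b)).toReal) := by
  have haI : a ∈ Icc a b := ⟨le_rfl, hab.le⟩
  have hM0 : 0 ≤ M := (abs_nonneg _).trans (hM a haI)
  have hF0 : 0 ≤ F := (abs_nonneg _).trans (hF a haI)
  obtain ⟨G, hG⟩ := isCompact_Icc.exists_bound_of_continuousOn hg'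
  have hG0 : 0 ≤ G := (norm_nonneg _).trans (hG a haI)
  refine le_of_forall_pos_le_add ?_
  intro ε hε
  set ε' := ε / (G * (b - a) + 1) with hε'
  have hba : 0 < b - a := by linarith
  have hε'0 : 0 < ε' := by positivity
  have huc := isCompact_Icc.uniformContinuousOn_of_continuous hf
  obtain ⟨δ, hδ, hδf⟩ := Metric.uniformContinuousOn_iff.1 huc ε' hε'0
  obtain ⟨n, hn⟩ := exists_nat_gt ((b - a) / δ)
  have hn0 : (0:ℝ) < n := lt_trans (by positivity) hn
  set h := (b - a) / n with hh
  have hh0 : 0 < h := by positivity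
  have hhδ : h < δ := by
    rw [hh, div_lt_iff₀ hn0]; rw [div_lt_iff₀ hδ] at hn; linarith
  have hnh : n * h = b - a := by rw [hh]; field_simp
  set p : ℕ → ℝ := fun i => a + i * h with hp
  have hp0 : p 0 = a := by simp [hp]
  have hpn : p n = b := by simp only [hp]; linarith
  have hpm : Monotone p := by
    intro i j hij
    simp only [hp]
    have : (i:ℝ) ≤ j := by exact_mod_cast hij
    nlinarith
  have hpI : ∀ i ≤ n, p i ∈ Icc a b := by
    intro i hi
    exact ⟨hp0 ▸ hpm (Nat.zero_le i), hpn ▸ hpm hi⟩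
  have hps : ∀ i, p (i+1) = p i + h := by intro i; simp only [hp]; push_cast; ring
  have hsub : ∀ i < n, Icc (p i) (p (i+1)) ⊆ Icc a b := fun i hi =>
    Icc_subset_Icc (hpI i hi.le).1 (hpI (i+1) hi).2
  have hintg : ∀ i < n, IntervalIntegrable (fun x => g' x * f x) volume (p i) (p (i+1)) := by
    intro i hi
    exact ((hg'.mul hf).mono (hsub i hi)).intervalIntegrable_of_Icc (hpm (Nat.le_succ i))
  have hintg' : ∀ i < n, IntervalIntegrable g' volume (p i) (p (i+1)) := by
    intro i hi
    exact (hg'.mono (hsub i hi)).intervalIntegrable_of_Icc (hpm (Nat.le_succ i))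
  have hsum := intervalIntegral.sum_integral_adjacent_intervals hintg
  rw [hp0, hpn] at hsum
  have hpiece : ∀ i < n, |(∫ x in p i..p (i+1), g' x * f x) - f (p i) * (g (p (i+1)) - g (p i))|
      ≤ G * ε' * h := by
    intro i hi
    have e : g (p (i+1)) - g (p i) = ∫ x in p i..p (i+1), g' x := by
      refine (ftc (hpm (Nat.le_succ i)) ?_ (hg'.mono (hsub i hi))).symm
      intro x hx
      exact (hg x (hsub i hi hx)).mono (hsub i hi)
    rw [e, ← intervalIntegral.integral_const_mul, ← intervalIntegral.integral_sub (hintg i hi)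
      ((hintg' i hi).const_mul _)]
    have hb := intervalIntegral.norm_integral_le_of_norm_le_const (a := p i) (b := p (i+1))
      (C := G * ε') (f := fun x => g' x * f x - f (p i) * g' x) (by
        intro x hx
        rw [uIoc_of_le (hpm (Nat.le_succ i))] at hx
        have hxI : x ∈ Icc a b := hsub i hi ⟨hx.1.le, hx.2⟩
        have e2 : g' x * f x - f (p i) * g' x = g' x * (f x - f (p i)) := by ring
        rw [e2, norm_mul]
        have hd := hδf x hxI (p i) (hpI i hi.le) (by
          rw [Real.dist_eq, abs_of_pos (by linarith [hx.1])]
          have := hx.2; rw [hps] at this; linarith)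
        rw [Real.dist_eq] at hd
        exact mul_le_mul (hG x hxI) hd.le (norm_nonneg _) hG0)
    rw [hps, add_sub_cancel_left, abs_of_pos hh0, ← hps] at hb
    exact hb
  have habel : ∀ m : ℕ, ∑ i ∈ Finset.range m, f (p i) * (g (p (i+1)) - g (p i))
      = f (p m) * g (p m) - f (p 0) * g (p 0)
        - ∑ i ∈ Finset.range m, (f (p (i+1)) - f (p i)) * g (p (i+1)) := by
    intro m
    induction m with
    | zero => simp
    | succ m ih => rw [Finset.sum_range_succ, Finset.sum_range_succ, ih]; ring
  have hvar : ∑ i ∈ Finset.range n, |f (p (i+1)) - f (p i)|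
      ≤ (eVariationOn f (Icc a b)).toReal := by
    have h1 := eVariationOn.sum_le_of_monotoneOn_Iic (f := f) (s := Icc a b) (n := n) (u := p)
      (hpm.monotoneOn _) (fun i hi => hpI i hi)
    have h2 := ENNReal.toReal_mono hbv h1
    refine le_trans (le_of_eq ?_) h2
    rw [ENNReal.toReal_sum (fun i _ => edist_ne_top _ _)]
    refine Finset.sum_congr rfl (fun i _ => ?_)
    rw [edist_dist, ENNReal.toReal_ofReal dist_nonneg, Real.dist_eq]
  have h1 : |∑ i ∈ Finset.range n, ((∫ x in p i..p (i+1), g' x * f x)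
      - f (p i) * (g (p (i+1)) - g (p i)))| ≤ n * (G * ε' * h) := by
    refine (Finset.abs_sum_le_sum_abs _ _).trans ?_
    have := Finset.sum_le_card_nsmul (Finset.range n) _ _
      (fun i hi => hpiece i (Finset.mem_range.1 hi))
    simpa using this
  rw [Finset.sum_sub_distrib, hsum, habel] at h1
  have h2 : |∑ i ∈ Finset.range n, (f (p (i+1)) - f (p i)) * g (p (i+1))|
      ≤ M * (eVariationOn f (Icc a b)).toReal := by
    refine (Finset.abs_sum_le_sum_abs _ _).trans ?_
    rw [mul_comm]
    refine le_trans ?_ (mul_le_mul_of_nonneg_right hvar hM0)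
    rw [Finset.sum_mul]
    refine Finset.sum_le_sum (fun i hi => ?_)
    rw [abs_mul]
    have := hM _ (hpI (i+1) (Finset.mem_range.1 hi))
    gcongr
  have h3 : ∀ x ∈ Icc a b, |f x * g x| ≤ F * M := by
    intro x hx
    rw [abs_mul]
    exact mul_le_mul (hF x hx) (hM x hx) (abs_nonneg _) hF0
  have h4 := h3 _ (hpI n le_rfl)
  have h5 := h3 _ (hpI 0 (Nat.zero_le _))
  have h6 : n * (G * ε' * h) ≤ ε := by
    have : n * (G * ε' * h) = G * (b - a) * ε' := by rw [← hnh]; ring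
    rw [this, hε', mul_div_assoc', div_le_iff₀ (by positivity)]
    nlinarith
  rw [abs_le] at *
  constructor <;> nlinarith [h1.1, h1.2, h2.1, h2.2, h4.1, h4.2, h5.1, h5.2]

end SLOde

namespace SLOde
open Set MeasureTheory

/-- `y'' = Q y` on `[a,b]` with first derivative `y1`. -/
def Sol (a b : ℝ) (Q y y1 : ℝ → ℝ) : Prop :=
  ∀ x ∈ Icc a b, HasDerivWithinAt y (y1 x) (Icc a b) x ∧
    HasDerivWithinAt y1 (Q x * y x) (Icc a b) x

variable {a b : ℝ} {q Q y y1 : ℝ → ℝ}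

lemma Sol.cont (h : Sol a b Q y y1) : ContinuousOn y (Icc a b) :=
  fun x hx => (h x hx).1.continuousWithinAt

lemma Sol.cont1 (h : Sol a b Q y y1) : ContinuousOn y1 (Icc a b) :=
  fun x hx => (h x hx).2.continuousWithinAt

lemma Sol.smul (h : Sol a b Q y y1) (s : ℝ) :
    Sol a b Q (fun x => s * y x) (fun x => s * y1 x) := by
  intro x hx
  refine ⟨(h x hx).1.const_mul s, ((h x hx).2.const_mul s).congr_deriv ?_⟩
  ring

lemma Sol.sub {z z1 : ℝ → ℝ} (h : Sol a b Q y y1) (h' : Sol a b Q z z1) :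
    Sol a b Q (fun x => y x - z x) (fun x => y1 x - z1 x) := by
  intro x hx
  refine ⟨(h x hx).1.sub (h' x hx).1, ((h x hx).2.sub (h' x hx).2).congr_deriv ?_⟩
  ring

lemma Sol.eq_zero (h : Sol a b Q y y1) {B : ℝ} (hB : ∀ x ∈ Icc a b, |Q x| ≤ B)
    (hab : a ≤ b) (h0 : y a = 0) (h1 : y1 a = 0) : ∀ x ∈ Icc a b, y x = 0 := by
  intro x hx
  have haI : a ∈ Icc a b := ⟨le_rfl, hab⟩
  have hB0 : 0 ≤ B := (abs_nonneg _).trans (hB a haI)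
  have := gron (a := a) (b := b) (E := fun x => y x ^ 2 + y1 x ^ 2)
    (E' := fun x => 2 * y x * y1 x + 2 * y1 x * (Q x * y x)) (M := 1 + B) (by linarith)
    (by
      intro x hx
      refine (((h x hx).1.pow 2).add ((h x hx).2.pow 2)).congr_deriv ?_
      push_cast; ring)
    (fun x _ => by positivity)
    (by
      intro x hx
      have e : 2 * y x * y1 x + 2 * y1 x * (Q x * y x) = (2 * (y x * y1 x)) * (1 + Q x) := by ring
      rw [e, abs_mul, mul_comm]
      have h1 : |1 + Q x| ≤ 1 + B := by
        have := abs_le.1 (hB x hx)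
        rw [abs_le]; constructor <;> linarith
      have h2 : |2 * (y x * y1 x)| ≤ y x ^ 2 + y1 x ^ 2 := by
        rw [abs_le]; constructor <;> nlinarith [sq_nonneg (y x - y1 x), sq_nonneg (y x + y1 x)]
      exact mul_le_mul h1 h2 (abs_nonneg _) (by linarith)) hx haI
  simp only [h0, h1] at this
  have h3 : y x ^ 2 ≤ 0 := by nlinarith [sq_nonneg (y1 x)]
  exact pow_eq_zero_iff (two_ne_zero) |>.1 (le_antisymm h3 (sq_nonneg _))

/-- Uniqueness up to scalar for solutions of the left boundary condition. -/
lemma Sol.proportional {z z1 : ℝ → ℝ} (h : Sol a b Q y y1) (h' : Sol a b Q z z1)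
    {B : ℝ} (hB : ∀ x ∈ Icc a b, |Q x| ≤ B) (hab : a ≤ b) {α : ℝ}
    (hy : y a * Real.cos α + y1 a * Real.sin α = 0)
    (hz : z a * Real.cos α + z1 a * Real.sin α = 0)
    (hne : ∃ x ∈ Icc a b, y x ≠ 0) : ∃ s : ℝ, ∀ x ∈ Icc a b, z x = s * y x := by
  have hW := bc_wronskian (Real.cos_sq_add_sin_sq _) hz hy
  have hdata : y a ≠ 0 ∨ y1 a ≠ 0 := by
    by_contra hcon
    push Not at hcon
    obtain ⟨x, hx, hx0⟩ := hne
    exact hx0 (h.eq_zero hB hab hcon.1 hcon.2 x hx)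
  have hs : ∃ s : ℝ, z a = s * y a ∧ z1 a = s * y1 a := by
    rcases hdata with h0 | h0
    · refine ⟨z a / y a, by field_simp, ?_⟩
      field_simp; linarith
    · refine ⟨z1 a / y1 a, ?_, by field_simp⟩
      field_simp; linarith
  obtain ⟨s, hs0, hs1⟩ := hs
  refine ⟨s, fun x hx => ?_⟩
  have := (h'.sub (h.smul s)).eq_zero hB hab (by simp [hs0]) (by simp [hs1]) x hx
  linarith

section energy
variable {κ B : ℝ}

lemma energy_gron (hab : a ≤ b) (h : Sol a b (fun x => q x - κ ^ 2) y y1)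
    (hB : ∀ x ∈ Icc a b, |q x| ≤ B) (hκ : 1 ≤ κ) {x t : ℝ} (hx : x ∈ Icc a b)
    (ht : t ∈ Icc a b) :
    y x ^ 2 + (y1 x / κ) ^ 2 ≤ Real.exp (B * (b - a)) * (y t ^ 2 + (y1 t / κ) ^ 2) := by
  have haI : a ∈ Icc a b := ⟨le_rfl, hab⟩
  have hB0 : 0 ≤ B := (abs_nonneg _).trans (hB a haI)
  refine gron (a := a) (b := b) (E := fun x => y x ^ 2 + (y1 x / κ) ^ 2)
    (E' := fun x => 2 * y x * (y1 x / κ) * (q x / κ)) hB0 ?_ (fun x _ => by positivity) ?_ hx ht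
  · intro x hx
    refine (((h x hx).1.pow 2).add (((h x hx).2.div_const κ).pow 2)).congr_deriv ?_
    have hκ0 : κ ≠ 0 := by linarith
    push_cast
    field_simp
    ring
  · intro x hx
    rw [abs_mul, mul_comm]
    have h1 : |q x / κ| ≤ B := by
      rw [abs_div, abs_of_pos (by linarith : 0 < κ)]
      refine (div_le_self (abs_nonneg _) hκ).trans (hB x hx)
    have h2 : |2 * y x * (y1 x / κ)| ≤ y x ^ 2 + (y1 x / κ) ^ 2 := by
      rw [abs_le]; constructor <;>
        nlinarith [sq_nonneg (y x - y1 x / κ), sq_nonneg (y x + y1 x / κ)]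
    exact mul_le_mul h1 h2 (abs_nonneg _) hB0

lemma energy_bound (hab : a < b) (h : Sol a b (fun x => q x - κ ^ 2) y y1)
    (hq : ContinuousOn q (Icc a b))
    (hB : ∀ x ∈ Icc a b, |q x| ≤ B) (hκ : 1 ≤ κ) (hκB : B ≤ κ)
    (hκP : 2 * Real.exp (B * (b - a)) / (b - a) ≤ κ) {x : ℝ} (hx : x ∈ Icc a b) :
    y x ^ 2 + (y1 x / κ) ^ 2 ≤
      6 * Real.exp (B * (b - a)) / (b - a) * ∫ x in a..b, y x ^ 2 := by
  have haI : a ∈ Icc a b := ⟨le_rfl, hab.le⟩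
  have hbI : b ∈ Icc a b := ⟨hab.le, le_rfl⟩
  have hB0 : 0 ≤ B := (abs_nonneg _).trans (hB a haI)
  set P := Real.exp (B * (b - a)) with hP
  have hP0 : 0 < P := Real.exp_pos _
  have hba : 0 < b - a := by linarith
  have hκ0 : 0 < κ := by linarith
  have cy := h.cont
  have cy1 := h.cont1
  have iy : IntervalIntegrable (fun x => y x ^ 2) volume a b :=
    (cy.pow 2).intervalIntegrable_of_Icc hab.le
  have iy1 : IntervalIntegrable (fun x => (y1 x / κ) ^ 2) volume a b :=
    ((cy1.div_const κ).pow 2).intervalIntegrable_of_Icc hab.le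
  have iE : IntervalIntegrable (fun x => y x ^ 2 + (y1 x / κ) ^ 2) volume a b := iy.add iy1
  set I := ∫ x in a..b, (y x ^ 2 + (y1 x / κ) ^ 2) with hI
  set S := ∫ x in a..b, y x ^ 2 with hS
  have hpt : ∀ x ∈ Icc a b, (b - a) * (y x ^ 2 + (y1 x / κ) ^ 2) ≤ P * I := by
    intro x hx
    have := intervalIntegral.integral_mono_on hab.le
      (intervalIntegrable_const (c := y x ^ 2 + (y1 x / κ) ^ 2)) (iE.const_mul P)
      (fun t ht => energy_gron hab.le h hB hκ hx ht)
    rw [intervalIntegral.integral_const, intervalIntegral.integral_const_mul] at this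
    simpa using this
  have hS0 : 0 ≤ S := intervalIntegral.integral_nonneg hab.le (fun x _ => by positivity)
  -- integration by parts
  have hparts : ∫ x in a..b, (κ ^ 2 * (y1 x / κ) ^ 2 + (q x - κ ^ 2) * y x ^ 2)
      = y b * y1 b - y a * y1 a := by
    refine ftc hab.le (F := fun x => y x * y1 x) ?_ ?_
    · intro x hx
      refine ((h x hx).1.mul (h x hx).2).congr_deriv ?_
      field_simp
    · fun_prop
  have hcomb : ∫ x in a..b, (κ ^ 2 * (y1 x / κ) ^ 2 + (q x - κ ^ 2) * y x ^ 2)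
      = κ ^ 2 * I + ∫ x in a..b, (q x - 2 * κ ^ 2) * y x ^ 2 := by
    rw [hI, ← intervalIntegral.integral_const_mul, ← intervalIntegral.integral_add]
    · congr 1; ext x; ring
    · exact iE.const_mul _
    · refine ContinuousOn.intervalIntegrable_of_Icc hab.le ?_
      fun_prop
  have hle : -((B + 2 * κ ^ 2) * S) ≤ ∫ x in a..b, (q x - 2 * κ ^ 2) * y x ^ 2 := by
    rw [hS, ← intervalIntegral.integral_const_mul, ← intervalIntegral.integral_neg]
    refine intervalIntegral.integral_mono_on hab.le (iy.const_mul _).neg ?_ ?_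
    · refine ContinuousOn.intervalIntegrable_of_Icc hab.le ?_
      fun_prop
    · intro x hx
      have := abs_le.1 (hB x hx)
      nlinarith [sq_nonneg (y x)]
  have hend : y b * y1 b - y a * y1 a ≤ κ * (P * I / (b - a)) := by
    have h1 : ∀ x ∈ Icc a b, |y x * y1 x| ≤ κ * ((P * I / (b - a)) / 2) := by
      intro x hx
      have h2 : y x ^ 2 + (y1 x / κ) ^ 2 ≤ P * I / (b - a) := by
        rw [le_div_iff₀ hba]; linarith [hpt x hx]
      have e : y x * y1 x = κ * (y x * (y1 x / κ)) := by field_simp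
      rw [e, abs_mul, abs_of_pos hκ0]
      gcongr
      rw [abs_le]; constructor <;>
        nlinarith [sq_nonneg (y x - y1 x / κ), sq_nonneg (y x + y1 x / κ)]
    have h2 := abs_le.1 (h1 a haI)
    have h3 := abs_le.1 (h1 b hbI)
    linarith [h2.1, h3.2]
  have hI0 : 0 ≤ I := intervalIntegral.integral_nonneg hab.le (fun x _ => by positivity)
  have h5 : κ * (P * I / (b - a)) ≤ κ ^ 2 * I / 2 := by
    have : κ * (P * I / (b - a)) = κ * I / 2 * (2 * P / (b - a)) := by ring
    rw [this]
    have : κ ^ 2 * I / 2 = κ * I / 2 * κ := by ring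
    rw [this]
    gcongr
  have h6 : κ ^ 2 * I ≤ κ ^ 2 * (6 * S) := by
    have : B ≤ κ ^ 2 := by nlinarith
    nlinarith
  have h7 : I ≤ 6 * S := le_of_mul_le_mul_left h6 (by positivity)
  have h8 := hpt x hx
  rw [div_mul_eq_mul_div, le_div_iff₀ hba]
  nlinarith

end energy

/-- Scaling of a solution satisfying the left boundary condition. -/
lemma normalize (α : ℝ) : ∃ T : ℝ, 0 ≤ T ∧ ∀ (κ : ℝ), 1 ≤ κ → ∀ u u' : ℝ, (u ≠ 0 ∨ u' ≠ 0) →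
    u * Real.cos α + u' * Real.sin α = 0 →
    ∃ s : ℝ, (Real.sin α ≠ 0 → s * u = 1 ∧ (s * u') ^ 2 = T) ∧
      (Real.sin α = 0 → s * u = 0 ∧ s * u' = κ) ∧
      (Real.sin α ≠ 0 → s * u' = - Real.cos α / Real.sin α) := by
  refine ⟨(Real.cos α / Real.sin α) ^ 2, sq_nonneg _, ?_⟩
  intro κ hκ u u' hne hbc
  by_cases hs : Real.sin α = 0
  · have hc : Real.cos α ≠ 0 := by
      intro hc
      have := Real.cos_sq_add_sin_sq α
      rw [hs, hc] at this; norm_num at this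
    have hu : u = 0 := by
      rw [hs] at hbc; simpa [hc] using hbc
    have hu' : u' ≠ 0 := by
      rcases hne with h | h
      · exact absurd hu h
      · exact h
    exact ⟨κ / u', fun h => absurd hs h, fun _ => ⟨by simp [hu], by field_simp⟩,
      fun h => absurd hs h⟩
  · have hu' : u' = - u * Real.cos α / Real.sin α := by field_simp; linarith
    have hu : u ≠ 0 := by
      intro h0
      rw [h0] at hu'
      rcases hne with h | h
      · exact h h0
      · exact h (by rw [hu']; simp)
    refine ⟨1 / u, fun _ => ⟨by field_simp, ?_⟩, fun h => absurd h hs, fun _ => ?_⟩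
    · rw [hu']; field_simp
    · rw [hu']; field_simp

set_option maxHeartbeats 1000000 in
/-- difference of two normalized solutions -/
lemma diff_bound (hab : a < b) {κ₁ κ₂ B K Em : ℝ} {z₁ z₁' z₂ z₂' : ℝ → ℝ}
    (h1 : Sol a b (fun x => q x - κ₁ ^ 2) z₁ z₁') (h2 : Sol a b (fun x => q x - κ₂ ^ 2) z₂ z₂')
    (hB : ∀ x ∈ Icc a b, |q x| ≤ B) (hK : 1 ≤ K) (hκ1 : K ≤ κ₁) (hκ2 : K ≤ κ₂)
    (hE1 : ∀ x ∈ Icc a b, z₁ x ^ 2 + (z₁' x / κ₁) ^ 2 ≤ Em)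
    (hE2 : ∀ x ∈ Icc a b, z₂ x ^ 2 + (z₂' x / κ₂) ^ 2 ≤ Em) {x : ℝ} (hx : x ∈ Icc a b) :
    (z₁ x - z₂ x) ^ 2 ≤ Real.exp (b - a) * ((z₁ a - z₂ a) ^ 2 + (z₁' a / κ₁ - z₂' a / κ₂) ^ 2
      + (3 * (κ₁ - κ₂) ^ 2 + 6 * B ^ 2 / K ^ 2) * Em) := by
  have haI : a ∈ Icc a b := ⟨le_rfl, hab.le⟩
  have hEm : 0 ≤ Em := le_trans (by positivity) (hE1 a haI)
  have hk1 : 0 < κ₁ := by linarith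
  have hk2 : 0 < κ₂ := by linarith
  have hK0 : 0 < K := by linarith
  set η := (3 * (κ₁ - κ₂) ^ 2 + 6 * B ^ 2 / K ^ 2) * Em with hη
  have hη0 : 0 ≤ η := by positivity
  set D : ℝ → ℝ := fun x => (z₁ x - z₂ x) ^ 2 + (z₁' x / κ₁ - z₂' x / κ₂) ^ 2 with hD
  set D' : ℝ → ℝ := fun x => 2 * (z₁ x - z₂ x) * ((κ₁ - κ₂) * (z₂' x / κ₂))
    + 2 * (z₁' x / κ₁ - z₂' x / κ₂) *
      (-(κ₁ - κ₂) * z₂ x + q x / κ₁ * z₁ x - q x / κ₂ * z₂ x) with hD'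
  have hder : ∀ x ∈ Icc a b, HasDerivWithinAt D (D' x) (Icc a b) x := by
    intro x hx
    refine ((((h1 x hx).1.sub (h2 x hx).1).pow 2).add
      ((((h1 x hx).2.div_const κ₁).sub ((h2 x hx).2.div_const κ₂)).pow 2)).congr_deriv ?_
    have hk1' := hk1.ne'
    have hk2' := hk2.ne'
    simp only [hD', Pi.sub_apply]
    push_cast
    field_simp
    ring
  have hbd : ∀ x ∈ Icc a b, D' x ≤ D x + η := by
    intro x hx
    have e1 := hE1 x hx
    have e2 := hE2 x hx
    have hqK : ∀ κ, K ≤ κ → (q x / κ) ^ 2 ≤ B ^ 2 / K ^ 2 := by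
      intro κ hκ
      rw [div_pow]
      have hb := hB x hx
      have : q x ^ 2 ≤ B ^ 2 := by rw [← sq_abs]; gcongr
      gcongr
    have q1 := hqK κ₁ hκ1
    have q2 := hqK κ₂ hκ2
    have m1 : (q x / κ₁) ^ 2 * z₁ x ^ 2 ≤ B ^ 2 / K ^ 2 * Em := by
      refine mul_le_mul q1 (by nlinarith [sq_nonneg (z₁' x / κ₁)]) (sq_nonneg _) (by positivity)
    have m2 : (q x / κ₂) ^ 2 * z₂ x ^ 2 ≤ B ^ 2 / K ^ 2 * Em := by
      refine mul_le_mul q2 (by nlinarith [sq_nonneg (z₂' x / κ₂)]) (sq_nonneg _) (by positivity)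
    have m3 : (κ₁ - κ₂) ^ 2 * (z₂ x ^ 2 + (z₂' x / κ₂) ^ 2) ≤ (κ₁ - κ₂) ^ 2 * Em := by
      gcongr
    have am : ∀ u v : ℝ, 2 * u * v ≤ u ^ 2 + v ^ 2 := fun u v => by nlinarith [sq_nonneg (u - v)]
    have a1 := am (z₁ x - z₂ x) ((κ₁ - κ₂) * (z₂' x / κ₂))
    have a2 := am (z₁' x / κ₁ - z₂' x / κ₂)
      (-(κ₁ - κ₂) * z₂ x + q x / κ₁ * z₁ x - q x / κ₂ * z₂ x)
    have three : ∀ u v w : ℝ, (u + v - w) ^ 2 ≤ 3 * (u ^ 2 + v ^ 2 + w ^ 2) := fun u v w => by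
      nlinarith [sq_nonneg (u - v), sq_nonneg (u + w), sq_nonneg (v + w)]
    have a3 := three (-(κ₁ - κ₂) * z₂ x) (q x / κ₁ * z₁ x) (q x / κ₂ * z₂ x)
    have a4 : 0 ≤ (κ₁ - κ₂) ^ 2 * (z₂' x / κ₂) ^ 2 := by positivity
    have e : η = 3 * ((κ₁ - κ₂) ^ 2 * Em) + 6 * (B ^ 2 / K ^ 2 * Em) := by rw [hη]; ring
    simp only [hD, hD']
    rw [e]
    have a5 : ((κ₁ - κ₂) * (z₂' x / κ₂)) ^ 2 = (κ₁ - κ₂) ^ 2 * (z₂' x / κ₂) ^ 2 := by ring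
    have a6 : (-(κ₁ - κ₂) * z₂ x) ^ 2 = (κ₁ - κ₂) ^ 2 * z₂ x ^ 2 := by ring
    have a7 : (q x / κ₁ * z₁ x) ^ 2 = (q x / κ₁) ^ 2 * z₁ x ^ 2 := by ring
    have a8 : (q x / κ₂ * z₂ x) ^ 2 = (q x / κ₂) ^ 2 * z₂ x ^ 2 := by ring
    rw [a6, a7, a8] at a3
    rw [a5] at a1
    rw [mul_add] at m3
    linarith
  have hm := monoOn_of (F := fun x => -((D x + η) * Real.exp (-x)))
    (F' := fun x => -((D' x - (D x + η)) * Real.exp (-x))) (by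
      intro x hx
      have he : HasDerivWithinAt (fun x => Real.exp (-x)) (-Real.exp (-x)) (Icc a b) x := by
        have := (hasDerivAt_neg x).exp.hasDerivWithinAt (s := Icc a b)
        exact this.congr_deriv (by ring)
      refine (((hder x hx).add_const η).mul he).neg.congr_deriv ?_
      ring) (by
      intro x hx
      have := hbd x hx
      have h2 := Real.exp_pos (-x)
      nlinarith) haI hx hx.1
  simp only at hm
  have hm2 : (D x + η) * Real.exp (-x) ≤ (D a + η) * Real.exp (-a) := by linarith
  have hm3 : D x + η ≤ (D a + η) * Real.exp (x - a) := by
    have e : D x + η = (D x + η) * Real.exp (-x) * Real.exp x := by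
      rw [mul_assoc, ← Real.exp_add]; simp
    rw [e]
    calc _ ≤ (D a + η) * Real.exp (-a) * Real.exp x := by gcongr
      _ = _ := by rw [mul_assoc, ← Real.exp_add]; ring_nf
  have hDa : 0 ≤ D a := by simp only [hD]; positivity
  have hm4 : D x + η ≤ Real.exp (b - a) * (D a + η) := by
    rw [mul_comm]
    refine hm3.trans ?_
    gcongr
    exact hx.2
  have : (z₁ x - z₂ x) ^ 2 ≤ D x := by simp only [hD]; nlinarith [sq_nonneg (z₁' x / κ₁ - z₂' x / κ₂)]
  linarith

lemma gap_mk (hab : a < b) (hq : ContinuousOn q (Icc a b)) {α B T κ : ℝ}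
    (hB : ∀ x ∈ Icc a b, |q x| ≤ B) (hT0 : 0 ≤ T)
    (hT : ∀ (κ : ℝ), 1 ≤ κ → ∀ u u' : ℝ, (u ≠ 0 ∨ u' ≠ 0) →
    u * Real.cos α + u' * Real.sin α = 0 →
    ∃ s : ℝ, (Real.sin α ≠ 0 → s * u = 1 ∧ (s * u') ^ 2 = T) ∧
      (Real.sin α = 0 → s * u = 0 ∧ s * u' = κ) ∧
      (Real.sin α ≠ 0 → s * u' = - Real.cos α / Real.sin α))
    (hκ1 : 1 ≤ κ) (hκB : B ≤ κ) (hκP : 2 * Real.exp (B * (b - a)) / (b - a) ≤ κ)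
    {y y' : ℝ → ℝ} (hs : Sol a b (fun x => q x - κ ^ 2) y y')
    (hbc : y a * Real.cos α + y' a * Real.sin α = 0) (hne : ∃ x ∈ Icc a b, y x ≠ 0) :
      ∃ s : ℝ, (Real.sin α ≠ 0 → s * y a = 1 ∧ (s * y' a) ^ 2 = T) ∧
      (Real.sin α = 0 → s * y a = 0 ∧ s * y' a = κ) ∧
      (Real.sin α ≠ 0 → s * y' a = - Real.cos α / Real.sin α) ∧
      (∀ x ∈ Icc a b, (s * y x) ^ 2 + (s * y' x / κ) ^ 2 ≤ Real.exp (B * (b - a)) * (1 + T)) ∧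
      1 ≤ 6 * Real.exp (B * (b - a)) / (b - a) * ∫ x in a..b, (s * y x) ^ 2 := by
  have haI : a ∈ Icc a b := ⟨le_rfl, hab.le⟩
  have hdata : y a ≠ 0 ∨ y' a ≠ 0 := by
    by_contra hcon
    push Not at hcon
    obtain ⟨x, hx, hx0⟩ := hne
    refine hx0 (hs.eq_zero (B := B + κ ^ 2) ?_ hab.le hcon.1 hcon.2 x hx)
    intro x hx
    have := abs_le.1 (hB x hx)
    rw [abs_le]; constructor <;> nlinarith [sq_nonneg κ]
  obtain ⟨s, h1, h2, h3⟩ := hT κ hκ1 _ _ hdata hbc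
  have hEa : 1 ≤ (s * y a) ^ 2 + (s * y' a / κ) ^ 2 ∧
      (s * y a) ^ 2 + (s * y' a / κ) ^ 2 ≤ 1 + T := by
    by_cases hsin : Real.sin α = 0
    · obtain ⟨h4, h5⟩ := h2 hsin
      rw [h4, h5, div_self (by linarith)]
      constructor <;> linarith
    · obtain ⟨h4, h5⟩ := h1 hsin
      rw [h4, div_pow, h5]
      constructor
      · have : 0 ≤ T / κ ^ 2 := by positivity
        linarith
      · have : T / κ ^ 2 ≤ T := div_le_self hT0 (by nlinarith)
        linarith
  refine ⟨s, h1, h2, h3, ?_, ?_⟩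
  · intro x hx
    refine (energy_gron hab.le (hs.smul s) hB hκ1 hx haI).trans ?_
    exact mul_le_mul_of_nonneg_left hEa.2 (Real.exp_pos _).le
  · refine hEa.1.trans ?_
    exact energy_bound hab (hs.smul s) hq hB hκ1 hκB hκP haI
set_option maxHeartbeats 1000000 in
/-- Gap lemma. -/
lemma gap (hab : a < b) (hq : ContinuousOn q (Icc a b)) (α : ℝ) :
    ∃ c > 0, ∃ K ≥ 1, ∀ κ₁ κ₂ : ℝ, K ≤ κ₁ → K ≤ κ₂ → ∀ y₁ y₁' y₂ y₂' : ℝ → ℝ,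
      Sol a b (fun x => q x - κ₁ ^ 2) y₁ y₁' → Sol a b (fun x => q x - κ₂ ^ 2) y₂ y₂' →
      y₁ a * Real.cos α + y₁' a * Real.sin α = 0 → y₂ a * Real.cos α + y₂' a * Real.sin α = 0 →
      (∃ x ∈ Icc a b, y₁ x ≠ 0) → (∃ x ∈ Icc a b, y₂ x ≠ 0) →
      ∫ x in a..b, y₁ x * y₂ x = 0 → c ≤ |κ₁ - κ₂| := by
  have haI : a ∈ Icc a b := ⟨le_rfl, hab.le⟩
  have hba : 0 < b - a := by linarith
  obtain ⟨B, hB⟩ := isCompact_Icc.exists_bound_of_continuousOn hq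
  have hB0 : 0 ≤ B := (norm_nonneg _).trans (hB a haI)
  obtain ⟨T, hT0, hT⟩ := normalize α
  set P := Real.exp (B * (b - a)) with hP
  have hP0 : 0 < P := Real.exp_pos _
  set e := Real.exp (b - a) with he
  have he0 : 0 < e := Real.exp_pos _
  set L := e * (T + 6 * B ^ 2 * (P * (1 + T))) with hL
  have hL0 : 0 ≤ L := by positivity
  set R := e * (3 * (P * (1 + T))) with hR
  have hR0 : 0 < R := by positivity
  refine ⟨Real.sqrt (1 / (6 * P * R)), Real.sqrt_pos.2 (by positivity),
    1 + B + 2 * P / (b - a) + 6 * P * L, ?_, ?_⟩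
  · have : 0 ≤ 2 * P / (b - a) := by positivity
    have : 0 ≤ 6 * P * L := by positivity
    linarith
  intro κ₁ κ₂ hκ1 hκ2 y₁ y₁' y₂ y₂' s1 s2 bc1 bc2 ne1 ne2 horth
  set K := 1 + B + 2 * P / (b - a) + 6 * P * L with hK
  have p1 : 0 ≤ 2 * P / (b - a) := by positivity
  have p2 : 0 ≤ 6 * P * L := by positivity
  have hK1 : 1 ≤ K := by linarith
  have hKL : 6 * P * L ≤ K ^ 2 := by nlinarith
  obtain ⟨t1, a1, b1, c1, d1, f1⟩ := gap_mk hab hq hB hT0 hT (κ := κ₁)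
    (by linarith) (by linarith) (by rw [← hP]; linarith) s1 bc1 ne1
  obtain ⟨t2, a2, b2, c2, d2, f2⟩ := gap_mk hab hq hB hT0 hT (κ := κ₂)
    (by linarith) (by linarith) (by rw [← hP]; linarith) s2 bc2 ne2
  have hDa : (t1 * y₁ a - t2 * y₂ a) ^ 2 + (t1 * y₁' a / κ₁ - t2 * y₂' a / κ₂) ^ 2
      ≤ T / K ^ 2 := by
    by_cases hsin : Real.sin α = 0
    · obtain ⟨h4, h5⟩ := b1 hsin
      obtain ⟨h6, h7⟩ := b2 hsin
      rw [h4, h5, h6, h7, div_self (by linarith), div_self (by linarith)]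
      simp; positivity
    · obtain ⟨h4, h5⟩ := a1 hsin
      obtain ⟨h6, h7⟩ := a2 hsin
      rw [h4, h6, c1 hsin, c2 hsin]
      rw [c1 hsin] at h5
      have e1 : (-Real.cos α / Real.sin α / κ₁ - -Real.cos α / Real.sin α / κ₂) ^ 2
          = (-Real.cos α / Real.sin α) ^ 2 * (1 / κ₁ - 1 / κ₂) ^ 2 := by ring
      rw [sub_self, e1, h5]
      have i1 : 1 / κ₁ ≤ 1 / K := one_div_le_one_div_of_le (by linarith) hκ1
      have i2 : 1 / κ₂ ≤ 1 / K := one_div_le_one_div_of_le (by linarith) hκ2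
      have i3 : 0 < 1 / κ₁ := by have : 0 < κ₁ := by linarith
                                 positivity
      have i4 : 0 < 1 / κ₂ := by have : 0 < κ₂ := by linarith
                                 positivity
      have : (1 / κ₁ - 1 / κ₂) ^ 2 ≤ (1 / K) ^ 2 := by
        rw [sq_le_sq, abs_of_pos (a := 1 / K) (by linarith), abs_le]
        constructor <;> linarith
      calc _ = T * (1 / κ₁ - 1 / κ₂) ^ 2 := by ring
        _ ≤ T * (1 / K) ^ 2 := by gcongr
        _ = _ := by ring
  have hdiff : ∀ x ∈ Icc a b, (t1 * y₁ x - t2 * y₂ x) ^ 2 ≤ L / K ^ 2 + R * (κ₁ - κ₂) ^ 2 := by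
    intro x hx
    have := diff_bound hab (s1.smul t1) (s2.smul t2) hB hK1 hκ1 hκ2 d1 d2 hx
    refine this.trans ?_
    calc _ ≤ e * (T / K ^ 2 + (3 * (κ₁ - κ₂) ^ 2 + 6 * B ^ 2 / K ^ 2) * (P * (1 + T))) := by
          gcongr
      _ = _ := by rw [hL, hR]; ring
  have c1' := s1.cont
  have c2' := s2.cont
  have hintg : ∫ x in a..b, (t1 * y₁ x - t2 * y₂ x) ^ 2
      ≤ (b - a) * (L / K ^ 2 + R * (κ₁ - κ₂) ^ 2) := by
    have := intervalIntegral.integral_mono_on hab.le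
      (f := fun x => (t1 * y₁ x - t2 * y₂ x) ^ 2)
      (ContinuousOn.intervalIntegrable_of_Icc hab.le (by fun_prop))
      (intervalIntegrable_const (μ := volume)) hdiff
    rw [intervalIntegral.integral_const, smul_eq_mul] at this
    exact this
  have hexp : ∫ x in a..b, (t1 * y₁ x - t2 * y₂ x) ^ 2
      = (∫ x in a..b, (t1 * y₁ x) ^ 2) + (∫ x in a..b, (t2 * y₂ x) ^ 2) := by
    have h0 : ∫ x in a..b, (2 * t1 * t2) * (y₁ x * y₂ x) = 0 := by
      rw [intervalIntegral.integral_const_mul, horth, mul_zero]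
    rw [← sub_zero (_ + _), ← h0, ← intervalIntegral.integral_add, ← intervalIntegral.integral_sub]
    · congr 1; ext x; ring
    all_goals exact ContinuousOn.intervalIntegrable_of_Icc hab.le (by fun_prop)
  have f1' : (b - a) / (6 * P) ≤ ∫ x in a..b, (t1 * y₁ x) ^ 2 := by
    rw [div_le_iff₀ (by positivity)]
    rw [div_mul_eq_mul_div, le_div_iff₀ hba] at f1
    linarith
  have f2' : (b - a) / (6 * P) ≤ ∫ x in a..b, (t2 * y₂ x) ^ 2 := by
    rw [div_le_iff₀ (by positivity)]
    rw [div_mul_eq_mul_div, le_div_iff₀ hba] at f2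
    linarith
  have hfin : (b - a) * (2 / (6 * P)) ≤ (b - a) * (L / K ^ 2 + R * (κ₁ - κ₂) ^ 2) := by
    have : (b - a) * (2 / (6 * P)) = (b - a) / (6 * P) + (b - a) / (6 * P) := by ring
    rw [this]; linarith
  have hfin2 := le_of_mul_le_mul_left hfin hba
  have hLK : L / K ^ 2 ≤ 1 / (6 * P) := by
    rw [div_le_div_iff₀ (by positivity) (by positivity)]
    linarith
  have h8 : 1 / (6 * P) ≤ R * (κ₁ - κ₂) ^ 2 := by
    have : 2 / (6 * P) = 1 / (6 * P) + 1 / (6 * P) := by ring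
    linarith
  rw [Real.sqrt_le_left (abs_nonneg _), sq_abs, div_le_iff₀ (by positivity)]
  rw [div_le_iff₀ (by positivity)] at h8
  linarith

end SLOde

namespace SLOde
open Set MeasureTheory

/-- Data for the Green function of `-u'' + k² u` with separated boundary conditions. -/
structure Gr (a b k α β W : ℝ) (φ φ1 χ χ1 : ℝ → ℝ) : Prop where
  hφ : ∀ x, HasDerivAt φ (φ1 x) x
  hφ1 : ∀ x, HasDerivAt φ1 (k ^ 2 * φ x) x
  hχ : ∀ x, HasDerivAt χ (χ1 x) x
  hχ1 : ∀ x, HasDerivAt χ1 (k ^ 2 * χ x) x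
  W0 : W ≠ 0
  wr : ∀ x, φ1 x * χ x - φ x * χ1 x = W
  bca : φ a * Real.cos α + φ1 a * Real.sin α = 0
  bcb : χ b * Real.cos β + χ1 b * Real.sin β = 0

/-- Green function. -/
noncomputable def green (W : ℝ) (φ χ : ℝ → ℝ) (x t : ℝ) : ℝ := φ (min x t) * χ (max x t) / W

/-- Solution operator. -/
noncomputable def solV (a b W : ℝ) (φ χ g : ℝ → ℝ) (x : ℝ) : ℝ :=
  ∫ t in a..b, green W φ χ x t * g t

/-- Explicit form of the solution operator. -/
noncomputable def solE (a b W : ℝ) (φ χ ψ ω g : ℝ → ℝ) (x : ℝ) : ℝ :=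
  (ω x * (∫ t in a..x, φ t * g t) - ψ x * (∫ t in b..x, χ t * g t)) / W

namespace Gr
variable {a b k α β W : ℝ} {φ φ1 χ χ1 : ℝ → ℝ}

lemma cφ (h : Gr a b k α β W φ φ1 χ χ1) : Continuous φ :=
  continuous_iff_continuousAt.2 fun x => (h.hφ x).continuousAt
lemma cχ (h : Gr a b k α β W φ φ1 χ χ1) : Continuous χ :=
  continuous_iff_continuousAt.2 fun x => (h.hχ x).continuousAt

lemma green_cont (h : Gr a b k α β W φ φ1 χ χ1) :
    Continuous (fun p : ℝ × ℝ => green W φ χ p.1 p.2) := by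
  unfold green
  have := h.cφ
  have := h.cχ
  fun_prop

lemma solV_eq (h : Gr a b k α β W φ φ1 χ χ1) {g : ℝ → ℝ} (hg : Continuous g) {x : ℝ}
    (hx : x ∈ Icc a b) : solV a b W φ χ g x = solE a b W φ χ φ χ g x := by
  have c1 := h.cφ
  have c2 := h.cχ
  have c3 : Continuous fun t => green W φ χ x t := h.green_cont.comp (by fun_prop : Continuous fun t => (x, t))
  unfold solV solE
  have c4 : Continuous fun t => green W φ χ x t * g t := c3.mul hg
  rw [← intervalIntegral.integral_add_adjacent_intervals (b := x)
    (c4.intervalIntegrable _ _) (c4.intervalIntegrable _ _)]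
  rw [intervalIntegral.integral_symm x b]
  have e1 : ∫ t in a..x, green W φ χ x t * g t = χ x / W * ∫ t in a..x, φ t * g t := by
    rw [← intervalIntegral.integral_const_mul]
    refine intervalIntegral.integral_congr fun t ht => ?_
    rw [uIcc_of_le hx.1] at ht
    simp only [green, min_eq_right ht.2, max_eq_left ht.2]; ring
  have e2 : ∫ t in x..b, green W φ χ x t * g t = φ x / W * ∫ t in x..b, χ t * g t := by
    rw [← intervalIntegral.integral_const_mul]
    refine intervalIntegral.integral_congr fun t ht => ?_
    rw [uIcc_of_le hx.2] at ht
    simp only [green, min_eq_left ht.1, max_eq_right ht.1]; ring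
  rw [e1, e2]; ring

lemma solE_deriv (h : Gr a b k α β W φ φ1 χ χ1) {g : ℝ → ℝ} (hg : Continuous g) (x : ℝ) :
    HasDerivAt (solE a b W φ χ φ χ g) (solE a b W φ χ φ1 χ1 g x) x := by
  have c1 := h.cφ
  have c2 := h.cχ
  have d1 := (c1.mul hg).integral_hasStrictDerivAt a x
  have d2 := (c2.mul hg).integral_hasStrictDerivAt b x
  refine ((((h.hχ x).mul d1.hasDerivAt).sub ((h.hφ x).mul d2.hasDerivAt)).div_const W).congr_deriv ?_
  unfold solE
  simp only [Pi.mul_apply]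
  ring

lemma solE_deriv1 (h : Gr a b k α β W φ φ1 χ χ1) {g : ℝ → ℝ} (hg : Continuous g) (x : ℝ) :
    HasDerivAt (solE a b W φ χ φ1 χ1 g) (k ^ 2 * solE a b W φ χ φ χ g x - g x) x := by
  have c1 := h.cφ
  have c2 := h.cχ
  have hW := h.W0
  have hw := h.wr x
  have d1 := (c1.mul hg).integral_hasStrictDerivAt a x
  have d2 := (c2.mul hg).integral_hasStrictDerivAt b x
  refine ((((h.hχ1 x).mul d1.hasDerivAt).sub ((h.hφ1 x).mul d2.hasDerivAt)).div_const W).congr_deriv ?_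
  unfold solE
  simp only [Pi.mul_apply]
  have : (φ1 x * χ x - φ x * χ1 x) * g x / W = g x := by rw [hw]; field_simp
  linear_combination -this

lemma solE_bca (h : Gr a b k α β W φ φ1 χ χ1) {g : ℝ → ℝ} :
    solE a b W φ χ φ χ g a * Real.cos α + solE a b W φ χ φ1 χ1 g a * Real.sin α = 0 := by
  unfold solE
  simp only [intervalIntegral.integral_same]
  linear_combination (-(∫ t in b..a, χ t * g t) / W) * h.bca

lemma solE_bcb (h : Gr a b k α β W φ φ1 χ χ1) {g : ℝ → ℝ} :
    solE a b W φ χ φ χ g b * Real.cos β + solE a b W φ χ φ1 χ1 g b * Real.sin β = 0 := by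
  unfold solE
  simp only [intervalIntegral.integral_same]
  linear_combination ((∫ t in a..b, φ t * g t) / W) * h.bcb

lemma const_of {F : ℝ → ℝ} (hF : ∀ x ∈ Icc a b, HasDerivWithinAt F 0 (Icc a b) x) {x y : ℝ}
    (hx : x ∈ Icc a b) (hy : y ∈ Icc a b) : F x = F y := by
  have h1 := monoOn_of (F' := fun _ => 0) hF (fun _ _ => le_rfl)
  have h2 := monoOn_of (F := fun x => - F x) (F' := fun _ => 0)
    (fun x hx => (hF x hx).neg.congr_deriv (by simp)) (fun _ _ => le_rfl)
  rcases le_total x y with h | h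
  · have := h1 hx hy h
    have := h2 hx hy h
    simp only at this
    linarith
  · have := h1 hy hx h
    have := h2 hy hx h
    simp only at this
    linarith

/-- Uniqueness. -/
lemma unique (h : Gr a b k α β W φ φ1 χ χ1) (hab : a < b) {g v v1 : ℝ → ℝ} (hg : Continuous g)
    (hv : ∀ x ∈ Icc a b, HasDerivWithinAt v (v1 x) (Icc a b) x)
    (hv1 : ∀ x ∈ Icc a b, HasDerivWithinAt v1 (k ^ 2 * v x - g x) (Icc a b) x)
    (hva : v a * Real.cos α + v1 a * Real.sin α = 0)
    (hvb : v b * Real.cos β + v1 b * Real.sin β = 0) {x : ℝ} (hx : x ∈ Icc a b) :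
    v x = solV a b W φ χ g x := by
  rw [h.solV_eq hg hx]
  have haI : a ∈ Icc a b := ⟨le_rfl, hab.le⟩
  have hbI : b ∈ Icc a b := ⟨hab.le, le_rfl⟩
  obtain ⟨u, hu⟩ : ∃ u, u = solE a b W φ χ φ χ g := ⟨_, rfl⟩
  obtain ⟨u1, hu1⟩ : ∃ u, u = solE a b W φ χ φ1 χ1 g := ⟨_, rfl⟩
  have du : ∀ x, HasDerivAt u (u1 x) x := fun x => by rw [hu, hu1]; exact h.solE_deriv hg x
  have du1 : ∀ x, HasDerivAt u1 (k ^ 2 * u x - g x) x := fun x => by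
    rw [hu, hu1]; exact h.solE_deriv1 hg x
  have ba : u a * Real.cos α + u1 a * Real.sin α = 0 := by rw [hu, hu1]; exact h.solE_bca
  have bb : u b * Real.cos β + u1 b * Real.sin β = 0 := by rw [hu, hu1]; exact h.solE_bcb
  rw [← hu]
  have w1 : φ x * (v1 x - u1 x) - φ1 x * (v x - u x) = 0 := by
    rw [const_of (F := fun x => φ x * (v1 x - u1 x) - φ1 x * (v x - u x)) (a := a) (b := b) ?_ hx haI]
    · exact bc_wronskian (Real.cos_sq_add_sin_sq α) h.bca (by linear_combination hva - ba)
    · intro x hx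
      refine (((h.hφ x).hasDerivWithinAt.mul ((hv1 x hx).sub (du1 x).hasDerivWithinAt)).sub
        ((h.hφ1 x).hasDerivWithinAt.mul ((hv x hx).sub (du x).hasDerivWithinAt))).congr_deriv ?_
      simp only [Pi.sub_apply]
      ring
  have w2 : χ x * (v1 x - u1 x) - χ1 x * (v x - u x) = 0 := by
    rw [const_of (F := fun x => χ x * (v1 x - u1 x) - χ1 x * (v x - u x)) (a := a) (b := b) ?_ hx hbI]
    · exact bc_wronskian (Real.cos_sq_add_sin_sq β) h.bcb (by linear_combination hvb - bb)
    · intro x hx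
      refine (((h.hχ x).hasDerivWithinAt.mul ((hv1 x hx).sub (du1 x).hasDerivWithinAt)).sub
        ((h.hχ1 x).hasDerivWithinAt.mul ((hv x hx).sub (du x).hasDerivWithinAt))).congr_deriv ?_
      simp only [Pi.sub_apply]
      ring
  have h0 : (v x - u x) * W = 0 := by
    rw [← h.wr x]
    linear_combination φ x * w2 - χ x * w1
  have := (mul_eq_zero.1 h0).resolve_right h.W0
  linarith

/-- Symmetry. -/
lemma symm' (h : Gr a b k α β W φ φ1 χ χ1) (hab : a < b) {g g' : ℝ → ℝ} (hg : Continuous g)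
    (hg' : Continuous g') :
    ∫ x in a..b, solV a b W φ χ g x * g' x = ∫ x in a..b, g x * solV a b W φ χ g' x := by
  have cE : ∀ g : ℝ → ℝ, Continuous g → Continuous (solE a b W φ χ φ χ g) := fun g hg =>
    continuous_iff_continuousAt.2 fun x => (h.solE_deriv hg x).continuousAt
  have c1 := cE g hg
  have c2 := cE g' hg'
  have := lagrange (α := α) (β := β) hab.le
    (fun x _ => (h.solE_deriv hg x).hasDerivWithinAt)
    (fun x _ => (h.solE_deriv1 hg x).hasDerivWithinAt)
    (fun x _ => (h.solE_deriv hg' x).hasDerivWithinAt)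
    (fun x _ => (h.solE_deriv1 hg' x).hasDerivWithinAt)
    (by fun_prop) (by fun_prop) h.solE_bca h.solE_bca h.solE_bcb h.solE_bcb
  have e1 : ∫ x in a..b, solV a b W φ χ g x * g' x
      = ∫ x in a..b, solE a b W φ χ φ χ g x * g' x :=
    intervalIntegral.integral_congr fun x hx => by
      rw [uIcc_of_le hab.le] at hx
      simp only [h.solV_eq hg hx]
  have e2 : ∫ x in a..b, g x * solV a b W φ χ g' x
      = ∫ x in a..b, g x * solE a b W φ χ φ χ g' x :=
    intervalIntegral.integral_congr fun x hx => by
      rw [uIcc_of_le hab.le] at hx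
      simp only [h.solV_eq hg' hx]
  rw [e1, e2]
  symm
  have c3 : Continuous fun x => g x * solE a b W φ χ φ χ g' x := hg.mul c2
  have c4 : Continuous fun x => solE a b W φ χ φ χ g x * g' x := c1.mul hg'
  rw [← sub_eq_zero, ← intervalIntegral.integral_sub (c3.intervalIntegrable _ _)
    (c4.intervalIntegrable _ _), ← this]
  congr 1
  ext x
  ring

end Gr
end SLOde

namespace SLSpec
open Set Filter Topology
open scoped InnerProductSpace

variable {H X : Type*} [NormedAddCommGroup H] [InnerProductSpace ℝ H] [CompleteSpace H]
  [NormedAddCommGroup X] [NormedSpace ℝ X]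

/-- Expansion of the range of a compact symmetric operator factored through `X`. -/
theorem expansion (J : X →L[ℝ] H) (R : H →L[ℝ] X) (hJ : Function.Injective J)
    (hcpt : IsCompactOperator (J ∘L R))
    (hsym : ∀ u v : H, ⟪J (R u), v⟫_ℝ = ⟪u, J (R v)⟫_ℝ)
    (Y : ℕ → H) (hY : Orthonormal ℝ Y) (y : ℕ → X) (θ : ℕ → ℝ)
    (hR : ∀ n, R (Y n) = θ n • y n)
    (hspan : ∀ (w : H) (μ : ℝ), μ ≠ 0 → J (R w) = μ • w → w ∈ Submodule.span ℝ (Set.range Y))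
    (F : H) : HasSum (fun n => (⟪Y n, F⟫_ℝ * θ n) • y n) (R F) := by
  have hker : ∀ g : H, (∀ n, ⟪Y n, g⟫_ℝ = 0) → R g = 0 := by
    intro g hg
    have hg' : ∀ w ∈ Submodule.span ℝ (Set.range Y), ⟪w, g⟫_ℝ = 0 := by
      intro w hw
      induction hw using Submodule.span_induction with
      | mem x hx => obtain ⟨n, rfl⟩ := hx; exact hg n
      | zero => simp
      | add x y _ _ h1 h2 => rw [inner_add_left, h1, h2, add_zero]
      | smul r x _ h1 => rw [inner_smul_left, h1, mul_zero]
    apply hJ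
    rw [map_zero]
    have hbot := ContinuousLinearMap.orthogonalComplement_iSup_eigenspaces_eq_bot
      (T := J ∘L R) hcpt (fun u v => hsym u v)
    have : J (R g) ∈ (⨆ μ, Module.End.eigenspace ((J ∘L R : H →L[ℝ] H) : H →ₗ[ℝ] H) μ)ᗮ := by
      rw [← Submodule.iInf_orthogonal, Submodule.mem_iInf]
      intro μ
      rw [Submodule.mem_orthogonal]
      intro w hw
      rw [Module.End.mem_eigenspace_iff] at hw
      have hw' : J (R w) = μ • w := hw
      rw [← hsym, hw', inner_smul_left]
      by_cases hμ : μ = 0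
      · simp [hμ]
      · rw [hg' w (hspan w μ hμ hw'), mul_zero]
    rw [hbot] at this
    simpa using this
  have hs : Summable (fun n => ⟪Y n, F⟫_ℝ • Y n) := by
    have := (hY.orthogonalFamily.summable_iff_norm_sq_summable (fun n => ⟪Y n, F⟫_ℝ)).2
      (hY.inner_products_summable (x := F))
    simpa using this
  obtain ⟨F', hF'⟩ := hs
  have h0 : R (F - F') = 0 := by
    apply hker
    intro n
    rw [inner_sub_right, sub_eq_zero]
    have h1 : HasSum (fun m => ⟪Y n, ⟪Y m, F⟫_ℝ • Y m⟫_ℝ) ⟪Y n, F'⟫_ℝ :=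
      hF'.mapL (innerSL ℝ (Y n))
    have h2 : HasSum (fun m => ⟪Y n, ⟪Y m, F⟫_ℝ • Y m⟫_ℝ) ⟪Y n, F⟫_ℝ := by
      have : ⟪Y n, ⟪Y n, F⟫_ℝ • Y n⟫_ℝ = ⟪Y n, F⟫_ℝ := by
        rw [inner_smul_right, real_inner_self_eq_norm_sq, hY.1 n]; simp
      rw [← this]
      convert hasSum_single (f := fun m => ⟪Y n, ⟪Y m, F⟫_ℝ • Y m⟫_ℝ) n ?_ using 1
      intro m hm
      simp only [inner_smul_right, hY.2 hm.symm, mul_zero]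
    exact h2.unique h1
  rw [map_sub, sub_eq_zero] at h0
  rw [h0]
  have := hF'.mapL R
  simpa [hR, smul_smul] using this

theorem theta_small (T : H →L[ℝ] H) (hcpt : IsCompactOperator T)
    (Y : ℕ → H) (hY : Orthonormal ℝ Y) (θ : ℕ → ℝ)
    (hT : ∀ n, T (Y n) = θ n • Y n) {ε : ℝ} (hε : 0 < ε) : ∃ n, |θ n| < ε := by
  by_contra hcon
  push Not at hcon
  have hK := hcpt.isCompact_closure_image_closedBall (𝕜₁ := ℝ) 1
  obtain ⟨z, -, ψ, hψ, hz⟩ := hK.tendsto_subseq (x := fun n => T (Y n))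
    (fun n => subset_closure ⟨Y n, by simp [hY.1 n], rfl⟩)
  have hc := hz.cauchySeq
  rw [Metric.cauchySeq_iff'] at hc
  obtain ⟨N, hN⟩ := hc ε hε
  have h1 := hN (N + 1) (by omega)
  have hne : ψ (N + 1) ≠ ψ N := (hψ (Nat.lt_succ_self N)).ne'
  simp only [Function.comp, hT, dist_eq_norm] at h1
  have h2 : ‖θ (ψ (N + 1)) • Y (ψ (N + 1)) - θ (ψ N) • Y (ψ N)‖ ^ 2
      = θ (ψ (N + 1)) ^ 2 + θ (ψ N) ^ 2 := by
    rw [norm_sub_sq_real, norm_smul, norm_smul, hY.1, hY.1, inner_smul_left, inner_smul_right,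
      hY.2 hne]
    simp
  have h3 := hcon (ψ N)
  have h4 : ε ^ 2 ≤ θ (ψ N) ^ 2 := by rw [← sq_abs (θ _)]; gcongr
  nlinarith [norm_nonneg (θ (ψ (N + 1)) • Y (ψ (N + 1)) - θ (ψ N) • Y (ψ N)),
    sq_nonneg (θ (ψ (N + 1)))]

end SLSpec

namespace SLSpec
open Set Filter Topology MeasureTheory
open scoped InnerProductSpace

variable {I : Type*} [MetricSpace I] [CompactSpace I] 
variable {H : Type*} [NormedAddCommGroup H] [InnerProductSpace ℝ H] [CompleteSpace H]

/-- Integral operator with kernel `Γ`. -/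
noncomputable def opA (Γ : C(I, H)) : H →L[ℝ] C(I, ℝ) :=
  LinearMap.mkContinuous
    { toFun := fun g => ⟨fun x => ⟪Γ x, g⟫_ℝ, by fun_prop⟩
      map_add' := by intro u v; ext x; simp [inner_add_right]
      map_smul' := by intro r u; ext x; simp [inner_smul_right] } ‖Γ‖
    (by
      intro g
      rw [ContinuousMap.norm_le _ (by positivity)]
      intro x
      refine (norm_inner_le_norm _ _).trans ?_
      gcongr
      exact Γ.norm_coe_le_norm x)

@[simp] lemma opA_apply (Γ : C(I, H)) (g : H) (x : I) : opA Γ g x = ⟪Γ x, g⟫_ℝ := rfl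

lemma opA_norm_le (Γ : C(I, H)) : ‖opA Γ‖ ≤ ‖Γ‖ := LinearMap.mkContinuous_norm_le _ (norm_nonneg _) _

lemma opA_compact (Γ : C(I, H)) : IsCompactOperator (opA Γ) := by
  refine (isCompactOperator_iff_isCompact_closure_image_closedBall
    (opA Γ : H →ₗ[ℝ] C(I, ℝ)) zero_lt_one).2 ?_
  rw [ContinuousLinearMap.coe_coe]
  have key : IsCompact (closure ((ContinuousMap.isometryEquivBoundedOfCompact I ℝ) ''
      (opA Γ '' Metric.closedBall 0 1))) := by
    refine BoundedContinuousFunction.arzela_ascoli (Metric.closedBall 0 ‖Γ‖)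
      (isCompact_closedBall _ _) _ ?_ ?_
    · rintro _ x ⟨_, ⟨g, hg, rfl⟩, rfl⟩
      simp only [mem_closedBall_zero_iff] at hg ⊢
      have : ‖opA Γ g x‖ ≤ ‖Γ‖ := by
        rw [opA_apply]
        refine (norm_inner_le_norm _ _).trans ?_
        have := Γ.norm_coe_le_norm x
        have := norm_nonneg (Γ x)
        nlinarith [norm_nonneg g]
      exact this
    · intro x
      rw [Metric.equicontinuousAt_iff_right]
      intro ε hε
      have hc := Metric.continuous_iff'.1 Γ.continuous x ε hε
      filter_upwards [hc] with x' hx'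
      rintro ⟨_, ⟨_, ⟨g, hg, rfl⟩, rfl⟩⟩
      simp only [mem_closedBall_zero_iff] at hg
      have : dist (opA Γ g x) (opA Γ g x') < ε := by
        rw [opA_apply, opA_apply, dist_eq_norm, ← inner_sub_left]
        refine (norm_inner_le_norm _ _).trans_lt ?_
        rw [dist_comm, dist_eq_norm] at hx'
        nlinarith [norm_nonneg g, norm_nonneg (Γ x - Γ x')]
      exact this
  rw [← (ContinuousMap.isometryEquivBoundedOfCompact I ℝ).toHomeomorph.isCompact_image,
    Homeomorph.image_closure]
  exact key

/-- The perturbed resolvent. -/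
theorem exists_R (J : C(I, ℝ) →L[ℝ] H) (hJd : DenseRange J) (Γ : C(I, H)) (q : C(I, ℝ))
    (hqs : ∀ u v : C(I, ℝ), ⟪J (q * u), J v⟫_ℝ = ⟪J u, J (q * v)⟫_ℝ)
    (hA : ∀ u v : C(I, ℝ), ⟪J (opA Γ (J u)), J v⟫_ℝ = ⟪J u, J (opA Γ (J v))⟫_ℝ)
    (hsmall : ‖J‖ * (‖q‖ * ‖Γ‖) < 1) :
    ∃ R : H →L[ℝ] C(I, ℝ), IsCompactOperator (J ∘L R) ∧
      (∀ u v : H, ⟪J (R u), v⟫_ℝ = ⟪u, J (R v)⟫_ℝ) ∧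
      (∀ g : H, R (g + J (q * opA Γ g)) = opA Γ g) ∧
      (∀ u : H, ∃ g : H, u = g + J (q * opA Γ g)) := by
  have hA' : ∀ u v : H, ⟪J (opA Γ u), v⟫_ℝ = ⟪u, J (opA Γ v)⟫_ℝ := by
    intro u v
    refine hJd.induction_on₂ (p := fun u v => ⟪J (opA Γ u), v⟫_ℝ = ⟪u, J (opA Γ v)⟫_ℝ) ?_ hA u v
    exact isClosed_eq (by fun_prop) (by fun_prop)
  let M : C(I, ℝ) →L[ℝ] C(I, ℝ) := ContinuousLinearMap.mul ℝ C(I, ℝ) q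
  have hMn : ‖M‖ ≤ ‖q‖ := ContinuousLinearMap.opNorm_mul_apply_le ℝ C(I, ℝ) q
  let B : H →L[ℝ] H := -(J ∘L M ∘L opA Γ)
  have hB : ‖B‖ < 1 := by
    refine lt_of_le_of_lt ?_ hsmall
    rw [norm_neg]
    refine (ContinuousLinearMap.opNorm_comp_le _ _).trans ?_
    gcongr
    refine (ContinuousLinearMap.opNorm_comp_le _ _).trans ?_
    gcongr
    exact opA_norm_le Γ
  let U := Units.oneSub B hB
  have hU : ∀ g, (U : H →L[ℝ] H) g = g + J (q * opA Γ g) := by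
    intro g
    simp only [U, Units.val_oneSub, B, sub_neg_eq_add]
    rfl
  have h1 : ∀ g, ((U⁻¹ : (H →L[ℝ] H)ˣ) : H →L[ℝ] H) ((U : H →L[ℝ] H) g) = g := by
    intro g
    rw [← mul_apply_eq_comp, Units.inv_mul]; rfl
  have h2 : ∀ g, (U : H →L[ℝ] H) (((U⁻¹ : (H →L[ℝ] H)ˣ) : H →L[ℝ] H) g) = g := by
    intro g
    rw [← mul_apply_eq_comp, Units.mul_inv]; rfl
  have h3 : ∀ g : H, (opA Γ ∘L ((U⁻¹ : (H →L[ℝ] H)ˣ) : H →L[ℝ] H)) (g + J (q * opA Γ g))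
      = opA Γ g := by
    intro g
    rw [← hU, ContinuousLinearMap.comp_apply, h1]
  have h4 : ∀ u : H, ∃ g : H, u = g + J (q * opA Γ g) := fun u =>
    ⟨((U⁻¹ : (H →L[ℝ] H)ˣ) : H →L[ℝ] H) u, by rw [← hU, h2]⟩
  refine ⟨opA Γ ∘L ((U⁻¹ : (H →L[ℝ] H)ˣ) : H →L[ℝ] H), ?_, ?_, h3, h4⟩
  · exact ((opA_compact Γ).comp_clm _).clm_comp J
  · intro u v
    obtain ⟨g, rfl⟩ := h4 u
    obtain ⟨g', rfl⟩ := h4 v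
    rw [h3, h3, inner_add_left, inner_add_right, hA', hqs]

end SLSpec

namespace SLSpec
open Set Filter Topology MeasureTheory
open scoped InnerProductSpace

lemma exists_J {a b : ℝ} (hab : a < b) : ∃ (H : Type) (_ : NormedAddCommGroup H)
    (_ : InnerProductSpace ℝ H) (_ : CompleteSpace H) (J : C(Icc a b, ℝ) →L[ℝ] H),
    DenseRange J ∧ ∀ u v : C(Icc a b, ℝ), ⟪J u, J v⟫_ℝ =
      ∫ x in a..b, IccExtend hab.le u x * IccExtend hab.le v x := by
  let μ : Measure (Icc a b) := Measure.comap Subtype.val volume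
  have : IsFiniteMeasure μ := ⟨by
    rw [Measure.comap_apply _ Subtype.val_injective
      (fun s hs => measurableSet_Icc.subtype_image hs) _ MeasurableSet.univ,
      image_univ, Subtype.range_coe]
    exact measure_Icc_lt_top⟩
  refine ⟨Lp ℝ 2 μ, inferInstance, inferInstance, inferInstance, ContinuousMap.toLp 2 μ ℝ,
    ContinuousMap.toLp_denseRange ℝ μ ℝ (by simp), ?_⟩
  intro u v
  rw [ContinuousMap.inner_toLp, intervalIntegral.integral_of_le hab.le,
    ← integral_Icc_eq_integral_Ioc, ← integral_subtype_comap measurableSet_Icc]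
  refine integral_congr_ae (Eventually.of_forall fun x => ?_)
  simp [mul_comm]

lemma J_inj {a b : ℝ} (hab : a < b) {H : Type} [NormedAddCommGroup H]
    [InnerProductSpace ℝ H] {J : C(Icc a b, ℝ) →L[ℝ] H}
    (hJ : ∀ u v : C(Icc a b, ℝ), ⟪J u, J v⟫_ℝ =
      ∫ x in a..b, IccExtend hab.le u x * IccExtend hab.le v x) : Function.Injective J := by
  rw [injective_iff_map_eq_zero]
  intro u hu
  have h := hJ u u
  rw [hu, inner_zero_left] at h
  have hc : Continuous (IccExtend hab.le u) := u.continuous.Icc_extend'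
  have h2 : ∀ x ∈ Icc a b, IccExtend hab.le u x * IccExtend hab.le u x = 0 := by
    intro x hx
    by_contra hne
    have := intervalIntegral.integral_pos hab (f := fun x => IccExtend hab.le u x * IccExtend hab.le u x)
      (by fun_prop) (fun x _ => mul_self_nonneg _)
      ⟨x, hx, lt_of_le_of_ne (mul_self_nonneg _) (Ne.symm hne)⟩
    linarith
  ext x
  have := h2 x x.2
  rw [IccExtend_of_mem _ _ x.2] at this
  simpa using this

end SLSpec

namespace SLSpec
open Set Filter Topology MeasureTheory SLOde
open scoped InnerProductSpace

lemma eig_sol {a b : ℝ} {q : ℝ → ℝ} {α β l : ℝ} {y : ℝ → ℝ} (h : IsSLEigenpair a b q α β l y) :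
    ∃ y1, Sol a b (fun x => q x - l) y y1 ∧ (∃ x ∈ Icc a b, y x ≠ 0) ∧
      y a * Real.cos α + y1 a * Real.sin α = 0 ∧ y b * Real.cos β + y1 b * Real.sin β = 0 := by
  obtain ⟨y1, y2, h1, h2, -, h4, h5, h6, h7⟩ := h
  refine ⟨y1, fun x hx => ⟨h1 x hx, (h2 x hx).congr_deriv ?_⟩, h4, h6, h7⟩
  linarith [h5 x hx]

lemma eig_orth {a b : ℝ} (hab : a < b) {q : ℝ → ℝ} (hq : ContinuousOn q (Icc a b)) {α β l m : ℝ}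
    {y z : ℝ → ℝ} (h : IsSLEigenpair a b q α β l y) (h' : IsSLEigenpair a b q α β m z)
    (hlm : l ≠ m) : ∫ x in a..b, y x * z x = 0 := by
  obtain ⟨y1, s, -, b1, b2⟩ := eig_sol h
  obtain ⟨z1, s', -, b1', b2'⟩ := eig_sol h'
  have cy := s.cont
  have cz := s'.cont
  have := lagrange hab.le (fun x hx => (s x hx).1) (fun x hx => (s x hx).2)
    (fun x hx => (s' x hx).1) (fun x hx => (s' x hx).2) (by fun_prop) (by fun_prop)
    b1 b1' b2 b2'
  have e : ∫ x in a..b, (y x * ((q x - m) * z x) - (q x - l) * y x * z x)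
      = (l - m) * ∫ x in a..b, y x * z x := by
    rw [← intervalIntegral.integral_const_mul]
    congr 1; ext x; ring
  rw [e] at this
  exact (mul_eq_zero.1 this).resolve_left (sub_ne_zero.2 hlm)

variable {a b : ℝ} (hab : a < b)

/-- The curried kernel. -/
noncomputable def kerC {k α β W : ℝ} {φ φ1 χ χ1 : ℝ → ℝ} (hG : Gr a b k α β W φ φ1 χ χ1) :
    C(Icc a b, C(Icc a b, ℝ)) :=
  ContinuousMap.curry ⟨fun p : Icc a b × Icc a b => green W φ χ p.1 p.2,
    hG.green_cont.comp (by fun_prop : Continuous fun p : Icc a b × Icc a b => ((p.1 : ℝ), (p.2 : ℝ)))⟩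

variable {H : Type} [NormedAddCommGroup H] [InnerProductSpace ℝ H] [CompleteSpace H]

/-- Composite kernel. -/
noncomputable def kerG (J : C(Icc a b, ℝ) →L[ℝ] H) {k α β W : ℝ} {φ φ1 χ χ1 : ℝ → ℝ}
    (hG : Gr a b k α β W φ φ1 χ χ1) : C(Icc a b, H) :=
  (⟨J, J.continuous⟩ : C(C(Icc a b, ℝ), H)).comp (kerC hG)

lemma kerG_norm (J : C(Icc a b, ℝ) →L[ℝ] H) {k α β W M : ℝ} {φ φ1 χ χ1 : ℝ → ℝ}
    (hG : Gr a b k α β W φ φ1 χ χ1) (hM0 : 0 ≤ M)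
    (hM : ∀ x ∈ Icc a b, ∀ t ∈ Icc a b, |green W φ χ x t| ≤ M) : ‖kerG J hG‖ ≤ ‖J‖ * M := by
  rw [ContinuousMap.norm_le _ (by positivity)]
  intro x
  refine (J.le_opNorm (kerC hG x)).trans ?_
  gcongr
  rw [ContinuousMap.norm_le _ hM0]
  intro t
  exact hM x x.2 t t.2

lemma opA_solV {J : C(Icc a b, ℝ) →L[ℝ] H}
    (hJ : ∀ u v : C(Icc a b, ℝ), ⟪J u, J v⟫_ℝ =
      ∫ x in a..b, IccExtend hab.le u x * IccExtend hab.le v x)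
    {k α β W : ℝ} {φ φ1 χ χ1 : ℝ → ℝ} (hG : Gr a b k α β W φ φ1 χ χ1) (u : C(Icc a b, ℝ))
    (x : Icc a b) : opA (kerG J hG) (J u) x = solV a b W φ χ (IccExtend hab.le u) x := by
  rw [opA_apply]
  change ⟪J (kerC hG x), J u⟫_ℝ = _
  rw [hJ]
  unfold solV
  refine intervalIntegral.integral_congr fun t ht => ?_
  rw [uIcc_of_le hab.le] at ht
  rw [IccExtend_of_mem _ (kerC hG x) ht]
  rfl

lemma opA_symm {J : C(Icc a b, ℝ) →L[ℝ] H}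
    (hJ : ∀ u v : C(Icc a b, ℝ), ⟪J u, J v⟫_ℝ =
      ∫ x in a..b, IccExtend hab.le u x * IccExtend hab.le v x)
    {k α β W : ℝ} {φ φ1 χ χ1 : ℝ → ℝ} (hG : Gr a b k α β W φ φ1 χ χ1) (u v : C(Icc a b, ℝ)) :
    ⟪J (opA (kerG J hG) (J u)), J v⟫_ℝ = ⟪J u, J (opA (kerG J hG) (J v))⟫_ℝ := by
  rw [hJ, hJ]
  have := hG.symm' hab (u.continuous.Icc_extend' (h := hab.le)) (v.continuous.Icc_extend' (h := hab.le))
  calc _ = ∫ x in a..b, solV a b W φ χ (IccExtend hab.le u) x * IccExtend hab.le v x := by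
        refine intervalIntegral.integral_congr fun t ht => ?_
        rw [uIcc_of_le hab.le] at ht
        rw [IccExtend_of_mem _ (opA (kerG J hG) (J u)) ht, opA_solV hab hJ]
    _ = _ := this
    _ = _ := by
        refine intervalIntegral.integral_congr fun t ht => ?_
        rw [uIcc_of_le hab.le] at ht
        rw [IccExtend_of_mem _ (opA (kerG J hG) (J v)) ht, opA_solV hab hJ]

end SLSpec

namespace SLSpec
open Set Filter Topology MeasureTheory SLOde
open scoped InnerProductSpace

set_option maxHeartbeats 1000000 in
theorem resolvent {a b : ℝ} (hab : a < b) {q : ℝ → ℝ} (hq : Continuous q) {α β : ℝ}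
    {lam : ℕ → ℝ} {y : ℕ → ℝ → ℝ}
    (heig : ∀ n, IsSLEigenpair a b q α β (lam n) (y n))
    (hmono : StrictMono lam)
    (hcomplete : ∀ μ z, IsSLEigenpair a b q α β μ z → ∃ n, lam n = μ)
    (hnorm : ∀ n, ∫ x in a..b, (y n x) ^ 2 = 1)
    {f : ℝ → ℝ} (hf : Continuous f) {c : ℕ → ℝ} (hc : ∀ n, c n = ∫ x in a..b, y n x * f x) :
    ∃ C0 : ℝ, 0 ≤ C0 ∧ ∀ (k W M : ℝ) (φ φ1 χ χ1 : ℝ → ℝ), Gr a b k α β W φ φ1 χ χ1 → 0 ≤ M →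
      (∀ x ∈ Icc a b, ∀ t ∈ Icc a b, |green W φ χ x t| ≤ M) → C0 * M < 1 →
      (∀ L, ∃ n, L < lam n) ∧ (∀ n, lam n + k ^ 2 ≠ 0) ∧
      ∃ v : ℝ → ℝ, Continuous v ∧
        (∀ x ∈ Icc a b, v x = solV a b W φ χ (fun t => f t - q t * v t) x) ∧
        HasSum (fun n => c n * y n b / (lam n + k ^ 2)) (v b) := by
  obtain ⟨H, i1, i2, i3, J, hJd, hJ⟩ := exists_J hab
  have hJi := J_inj hab hJ
  obtain ⟨qc, hqc⟩ : ∃ qc : C(Icc a b, ℝ), ∀ x : Icc a b, qc x = q x :=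
    ⟨⟨fun x => q x, by fun_prop⟩, fun _ => rfl⟩
  obtain ⟨fc, hfc⟩ : ∃ fc : C(Icc a b, ℝ), ∀ x : Icc a b, fc x = f x :=
    ⟨⟨fun x => f x, by fun_prop⟩, fun _ => rfl⟩
  choose y1 hsol hne hbca hbcb using fun n => eig_sol (heig n)
  have hyc : ∃ yc : ℕ → C(Icc a b, ℝ), ∀ n (x : Icc a b), yc n x = y n x :=
    ⟨fun n => ⟨fun x => y n x, continuousOn_iff_continuous_restrict.1 (hsol n).cont⟩,
      fun _ _ => rfl⟩
  obtain ⟨yc, hyc⟩ := hyc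
  have hext : ∀ (u : C(Icc a b, ℝ)) {x : ℝ} (hx : x ∈ Icc a b), IccExtend hab.le u x = u ⟨x, hx⟩ :=
    fun u x hx => IccExtend_of_mem _ _ hx
  refine ⟨‖J‖ * (‖qc‖ * ‖J‖), by positivity, ?_⟩
  intro k W M φ φ1 χ χ1 hG hM0 hM hsm
  have hqs : ∀ u v : C(Icc a b, ℝ), ⟪J (qc * u), J v⟫_ℝ = ⟪J u, J (qc * v)⟫_ℝ := by
    intro u v
    rw [hJ, hJ]
    refine intervalIntegral.integral_congr fun x hx => ?_
    rw [uIcc_of_le hab.le] at hx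
    simp only [hext _ hx, ContinuousMap.mul_apply]
    ring
  obtain ⟨R, hcpt, hsym, hR, hsurj⟩ := exists_R J hJd (kerG J hG) qc hqs (opA_symm hab hJ hG) (by
    refine lt_of_le_of_lt ?_ hsm
    have := kerG_norm J hG hM0 hM
    calc _ ≤ ‖J‖ * (‖qc‖ * (‖J‖ * M)) := by gcongr
      _ = _ := by ring)
  obtain ⟨A, hAdef⟩ : ∃ A, A = opA (kerG J hG) := ⟨_, rfl⟩
  have hAV : ∀ (u : C(Icc a b, ℝ)) (x : Icc a b),
      A (J u) x = solV a b W φ χ (IccExtend hab.le u) x := fun u x => by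
    rw [hAdef]; exact opA_solV hab hJ hG u x
  rw [← hAdef] at hR hsurj
  have cext : ∀ u : C(Icc a b, ℝ), Continuous (IccExtend hab.le u) :=
    fun u => u.continuous.Icc_extend'
  have hyA : ∀ n, A (J ((lam n + k ^ 2) • yc n - qc * yc n)) = yc n := by
    intro n
    ext x
    rw [hAV, hyc]
    symm
    refine hG.unique hab (cext _) (fun x hx => (hsol n x hx).1) ?_ (hbca n) (hbcb n) x.2
    intro x hx
    refine (hsol n x hx).2.congr_deriv ?_
    rw [hext _ hx]
    simp only [ContinuousMap.sub_apply, ContinuousMap.smul_apply, ContinuousMap.mul_apply, hyc,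
      hqc, smul_eq_mul]
    ring
  have hRy : ∀ n, (lam n + k ^ 2) • R (J (yc n)) = yc n := by
    intro n
    have := hR (J ((lam n + k ^ 2) • yc n - qc * yc n))
    rw [hyA, ← map_add, sub_add_cancel, map_smul, map_smul] at this
    exact this
  have hinner : ∀ n (u : C(Icc a b, ℝ)) (g : ℝ → ℝ), (∀ x : Icc a b, u x = g x) →
      ⟪J (yc n), J u⟫_ℝ = ∫ x in a..b, y n x * g x := by
    intro n u g hu
    rw [hJ]
    refine intervalIntegral.integral_congr fun x hx => ?_
    rw [uIcc_of_le hab.le] at hx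
    simp only [hext _ hx, hyc, hu]
  have horn : Orthonormal ℝ (fun n => J (yc n)) := by
    rw [orthonormal_iff_ite]
    intro n m
    rw [hinner n (yc m) (y m) (hyc m)]
    split_ifs with h
    · subst h
      rw [← hnorm n]
      congr 1; ext x; ring
    · exact eig_orth hab hq.continuousOn (heig n) (heig m) (fun e => h (hmono.injective e))
  have hs0 : ∀ n, lam n + k ^ 2 ≠ 0 := by
    intro n h0
    have h1 := hRy n
    rw [h0, zero_smul] at h1
    have h2 := horn.1 n
    simp only [← h1, map_zero, norm_zero] at h2
    exact zero_ne_one h2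
  have hRy' : ∀ n, R (J (yc n)) = (lam n + k ^ 2)⁻¹ • yc n := by
    intro n
    rw [eq_inv_smul_iff₀ (hs0 n)]
    exact hRy n
  refine ⟨?_, hs0, ?_⟩
  · intro L
    by_contra hcon
    push Not at hcon
    have hD : 0 < |L| + |lam 0| + k ^ 2 + 1 := by positivity
    obtain ⟨n, hn⟩ := theta_small (J ∘L R) hcpt _ horn (fun n => (lam n + k ^ 2)⁻¹)
      (fun n => by simp only [ContinuousLinearMap.comp_apply, hRy', map_smul])
      (ε := (|L| + |lam 0| + k ^ 2 + 1)⁻¹) (by positivity)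
    rw [abs_inv, inv_lt_inv₀ (abs_pos.2 (hs0 n)) hD] at hn
    have h1 := hcon n
    have h2 := hmono.monotone (Nat.zero_le n)
    have h3 := le_abs_self L
    have h4 := neg_abs_le (lam 0)
    have h5 : |lam n + k ^ 2| ≤ |L| + |lam 0| + k ^ 2 + 1 := by
      rw [abs_le]
      constructor <;> nlinarith [abs_nonneg L, abs_nonneg (lam 0), sq_nonneg k]
    linarith
  have hspan : ∀ (w : H) (μ : ℝ), μ ≠ 0 → J (R w) = μ • w →
      w ∈ Submodule.span ℝ (Set.range fun n => J (yc n)) := by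
    intro w μ hμ hw
    obtain ⟨g, hg⟩ := hsurj w
    have hRw : R w = A g := by rw [hg, hR]
    obtain ⟨h0, hh0⟩ : ∃ h0, h0 = A g := ⟨_, rfl⟩
    rw [hRw, ← hh0] at hw
    have hwJ : w = J (μ⁻¹ • h0) := by rw [map_smul, eq_inv_smul_iff₀ hμ, hw]
    have hgJ : g = J (μ⁻¹ • h0 - qc * h0) := by
      rw [map_sub, ← hwJ, hh0]
      exact eq_sub_of_add_eq hg.symm
    obtain ⟨G, hGd⟩ : ∃ G, G = IccExtend hab.le (μ⁻¹ • h0 - qc * h0 : C(Icc a b, ℝ)) := ⟨_, rfl⟩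
    have hGc : Continuous G := by rw [hGd]; exact cext _
    have hz : ∀ {x : ℝ} (hx : x ∈ Icc a b), solE a b W φ χ φ χ G x = h0 ⟨x, hx⟩ := by
      intro x hx
      rw [← hG.solV_eq hGc hx]
      conv_rhs => rw [hh0, hgJ]
      rw [hAV, hGd]
    have hGx : ∀ {x : ℝ} (hx : x ∈ Icc a b), G x = μ⁻¹ * h0 ⟨x, hx⟩ - q x * h0 ⟨x, hx⟩ := by
      intro x hx
      rw [hGd, hext _ hx]
      simp [hqc]
    by_cases hzero : h0 = 0
    · rw [hwJ, hzero]; simp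
    have hex : ∃ x ∈ Icc a b, solE a b W φ χ φ χ G x ≠ 0 := by
      by_contra hcon
      push Not at hcon
      apply hzero
      ext x
      rw [← hz x.2, hcon x x.2]; rfl
    have heg : IsSLEigenpair a b q α β (μ⁻¹ - k ^ 2) (solE a b W φ χ φ χ G) := by
      refine ⟨solE a b W φ χ φ1 χ1 G, fun x => k ^ 2 * solE a b W φ χ φ χ G x - G x,
        fun x _ => (hG.solE_deriv hGc x).hasDerivWithinAt,
        fun x _ => (hG.solE_deriv1 hGc x).hasDerivWithinAt, ?_, hex, ?_, hG.solE_bca, hG.solE_bcb⟩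
      · have : Continuous (solE a b W φ χ φ χ G) :=
          continuous_iff_continuousAt.2 fun x => (hG.solE_deriv hGc x).continuousAt
        fun_prop
      · intro x hx
        beta_reduce
        rw [hGx hx, hz hx]; ring
    obtain ⟨n, hn⟩ := hcomplete _ _ heg
    obtain ⟨z1, zs, -, zb, -⟩ := eig_sol heg
    rw [← hn] at zs
    obtain ⟨B, hB⟩ := isCompact_Icc.exists_bound_of_continuousOn
      (f := fun x => q x - lam n) (s := Icc a b) (by fun_prop)
    obtain ⟨s, hs⟩ := (hsol n).proportional zs hB hab.le (hbca n) zb (hne n)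
    have : h0 = s • yc n := by
      ext x
      rw [← hz x.2, hs x x.2]
      simp [hyc]
    rw [hwJ, this, smul_smul, map_smul]
    exact Submodule.smul_mem _ _ (Submodule.subset_span ⟨n, rfl⟩)
  have hexp := expansion J R hJi hcpt hsym _ horn yc _ hRy' hspan (J fc)
  refine ⟨IccExtend hab.le (R (J fc)), cext _, ?_, ?_⟩
  · intro x hx
    obtain ⟨g, hg⟩ := hsurj (J fc)
    have hRg : R (J fc) = A g := by rw [hg, hR]
    have hgJ : g = J (fc - qc * R (J fc)) := by
      rw [map_sub, hRg]
      exact eq_sub_of_add_eq hg.symm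
    rw [hext _ hx]
    conv_lhs => rw [hRg, hgJ]
    rw [hAV]
    unfold solV
    refine intervalIntegral.integral_congr fun t ht => ?_
    rw [uIcc_of_le hab.le] at ht
    simp only [hext _ ht, ContinuousMap.sub_apply, ContinuousMap.mul_apply, hfc, hqc]
  · have hbI : b ∈ Icc a b := ⟨hab.le, le_rfl⟩
    rw [hext _ hbI]
    have := hexp.mapL (ContinuousMap.evalCLM ℝ (⟨b, hbI⟩ : Icc a b))
    have e : (fun n => c n * y n b / (lam n + k ^ 2)) = fun n =>
        ContinuousMap.evalCLM ℝ (⟨b, hbI⟩ : Icc a b)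
          ((⟪J (yc n), J fc⟫_ℝ * (lam n + k ^ 2)⁻¹) • yc n) := by
      ext n
      simp only [ContinuousMap.evalCLM_apply, ContinuousMap.smul_apply, hyc, smul_eq_mul]
      rw [hinner n fc f hfc, ← hc]
      ring
    rw [e]
    exact this

end SLSpec

namespace SLKer
open Set Filter Topology MeasureTheory SLOde Real

lemma rlem (s c : ℝ) (h : s ^ 2 + c ^ 2 = 1) : ∃ r : ℝ → ℝ,
    (∀ᶠ k in atTop, |r k| ≤ 2 ∧ (1 + r k) * c - k * (1 - r k) * s = 0) ∧
    (s ≠ 0 → Tendsto r atTop (𝓝 1)) := by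
  by_cases hs : s = 0
  · subst hs
    exact ⟨fun _ => -1, by simp, by simp⟩
  have h1 : Tendsto (fun k : ℝ => k + c / s) atTop atTop :=
    tendsto_atTop_add_const_right _ _ tendsto_id
  have h2 : Tendsto (fun k : ℝ => 1 - 2 * (c / s) / (k + c / s)) atTop (𝓝 1) := by
    have := (tendsto_const_nhds (x := 2 * (c / s))).div_atTop h1
    simpa using (tendsto_const_nhds (x := (1 : ℝ))).sub this
  refine ⟨fun k => 1 - 2 * (c / s) / (k + c / s), ?_, fun _ => h2⟩
  have h3 := h2.eventually (Metric.ball_mem_nhds (1 : ℝ) one_pos)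
  filter_upwards [h3, h1.eventually (eventually_gt_atTop 0)] with k hk hk2
  rw [Real.dist_eq, abs_lt] at hk
  refine ⟨by rw [abs_le]; constructor <;> linarith, ?_⟩
  have h5 : k * s + c ≠ 0 := by
    have : k * s + c = (k + c / s) * s := by field_simp
    rw [this]; exact mul_ne_zero hk2.ne' hs
  have e : 2 * (c / s) / (k + c / s) = 2 * c / (k * s + c) := by
    rw [div_eq_div_iff hk2.ne' h5]; field_simp
  have e2 : 2 * c / (k * s + c) * (k * s + c) = 2 * c := div_mul_cancel₀ _ h5
  rw [e]
  linear_combination -e2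

/-- left function -/
noncomputable def phi (k r a t : ℝ) : ℝ := exp (k * (t - a)) + r * exp (-(k * (t - a)))
/-- its derivative -/
noncomputable def phi1 (k r a t : ℝ) : ℝ := k * (exp (k * (t - a)) - r * exp (-(k * (t - a))))
/-- right function -/
noncomputable def chi (k r b t : ℝ) : ℝ := exp (k * (b - t)) + r * exp (-(k * (b - t)))
/-- its derivative -/
noncomputable def chi1 (k r b t : ℝ) : ℝ := -(k * (exp (k * (b - t)) - r * exp (-(k * (b - t)))))
/-- Wronskian -/
noncomputable def wro (k r s l : ℝ) : ℝ := 2 * k * (exp (k * l) - r * s * exp (-(k * l)))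

lemma dpos (k a t : ℝ) : HasDerivAt (fun t => exp (k * (t - a))) (k * exp (k * (t - a))) t := by
  have := (((hasDerivAt_id t).sub_const a).const_mul k).exp
  refine this.congr_deriv ?_
  simp; ring

lemma dneg (k a t : ℝ) :
    HasDerivAt (fun t => exp (-(k * (t - a)))) (-(k * exp (-(k * (t - a))))) t := by
  have := (((hasDerivAt_id t).sub_const a).const_mul k).neg.exp
  refine this.congr_deriv ?_
  simp; ring

lemma dpos' (k b t : ℝ) : HasDerivAt (fun t => exp (k * (b - t))) (-(k * exp (k * (b - t)))) t := by
  have := (((hasDerivAt_id t).const_sub b).const_mul k).exp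
  refine this.congr_deriv ?_
  simp; ring

lemma dneg' (k b t : ℝ) :
    HasDerivAt (fun t => exp (-(k * (b - t)))) (k * exp (-(k * (b - t)))) t := by
  have := (((hasDerivAt_id t).const_sub b).const_mul k).neg.exp
  refine this.congr_deriv ?_
  simp; ring

lemma gr_mk {a b k α β r s : ℝ} (hW : wro k r s (b - a) ≠ 0)
    (hr : (1 + r) * -cos α - k * (1 - r) * sin α = 0)
    (hs : (1 + s) * cos β - k * (1 - s) * sin β = 0) :
    Gr a b k α β (wro k r s (b - a)) (phi k r a) (phi1 k r a) (chi k s b) (chi1 k s b) where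
  hφ x := ((dpos k a x).add ((dneg k a x).const_mul r)).congr_deriv (by unfold phi1; ring)
  hφ1 x := (((dpos k a x).sub ((dneg k a x).const_mul r)).const_mul k).congr_deriv (by
    unfold phi; ring)
  hχ x := ((dpos' k b x).add ((dneg' k b x).const_mul s)).congr_deriv (by unfold chi1; ring)
  hχ1 x := ((((dpos' k b x).sub ((dneg' k b x).const_mul s)).const_mul k).neg).congr_deriv (by
    unfold chi; ring)
  W0 := hW
  wr x := by
    have e1 : exp (k * (b - a)) = exp (k * (x - a)) * exp (k * (b - x)) := by
      rw [← exp_add]; ring_nf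
    have e2 : exp (-(k * (b - a))) = exp (-(k * (x - a))) * exp (-(k * (b - x))) := by
      rw [← exp_add]; ring_nf
    unfold phi phi1 chi chi1 wro
    rw [e1, e2]; ring
  bca := by unfold phi phi1; simp; linarith
  bcb := by unfold chi chi1; simp; linarith

lemma phi_le {k r a t : ℝ} (hk : 0 ≤ k) (hr : |r| ≤ 2) (ht : a ≤ t) :
    |phi k r a t| ≤ 3 * exp (k * (t - a)) := by
  have h1 : exp (-(k * (t - a))) ≤ exp (k * (t - a)) := by
    apply exp_le_exp.2; nlinarith [mul_nonneg hk (sub_nonneg.2 ht)]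
  unfold phi
  have h2 : |r * exp (-(k * (t - a)))| ≤ 2 * exp (k * (t - a)) := by
    rw [abs_mul, abs_of_pos (exp_pos _)]
    exact mul_le_mul hr h1 (exp_pos _).le (by norm_num)
  have := abs_add_le (exp (k * (t - a))) (r * exp (-(k * (t - a))))
  rw [abs_of_pos (exp_pos (k * (t - a)))] at this
  linarith

lemma chi_le {k r b t : ℝ} (hk : 0 ≤ k) (hr : |r| ≤ 2) (ht : t ≤ b) :
    |chi k r b t| ≤ 3 * exp (k * (b - t)) := phi_le hk hr ht

lemma green_le {a b k r s : ℝ} (hk : 0 < k) (hr : |r| ≤ 2) (hs : |s| ≤ 2)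
    (hW : k * exp (k * (b - a)) ≤ wro k r s (b - a)) {x t : ℝ} (hx : x ∈ Icc a b)
    (ht : t ∈ Icc a b) :
    |green (wro k r s (b - a)) (phi k r a) (chi k s b) x t| ≤
      9 / k * exp (-(k * (max x t - min x t))) := by
  have hW0 : 0 < wro k r s (b - a) := lt_of_lt_of_le (by positivity) hW
  unfold green
  rw [abs_div, abs_mul, abs_of_pos hW0, div_le_iff₀ hW0]
  have h1 := phi_le hk.le hr (le_min hx.1 ht.1)
  have h2 := chi_le hk.le hs (max_le hx.2 ht.2)
  calc _ ≤ (3 * exp (k * (min x t - a))) * (3 * exp (k * (b - max x t))) :=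
        mul_le_mul h1 h2 (abs_nonneg _) (by positivity)
    _ = 9 / k * exp (-(k * (max x t - min x t))) * (k * exp (k * (b - a))) := by
        have : exp (k * (min x t - a)) * exp (k * (b - max x t)) =
          exp (-(k * (max x t - min x t))) * exp (k * (b - a)) := by
          rw [← exp_add, ← exp_add]; ring_nf
        field_simp
        linear_combination 9 * this
    _ ≤ _ := by gcongr

lemma wro_ge {k r s l : ℝ} (hk : 0 < k) (hr : |r| ≤ 2) (hs : |s| ≤ 2) (hl : 2 ≤ k * l) :
    k * exp (k * l) ≤ wro k r s l := by
  have h1 : r * s ≤ 4 := by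
    have := abs_mul r s
    have h2 := le_abs_self (r * s)
    nlinarith [abs_nonneg r, abs_nonneg s]
  have h2 : 3 ≤ exp (k * l) := by have := add_one_le_exp (k * l); linarith
  have h3 : exp (k * l) * exp (-(k * l)) = 1 := by rw [← exp_add]; simp
  have h4 : 0 < exp (-(k * l)) := exp_pos _
  have h6 : 9 * exp (-(k * l)) ≤ exp (k * l) := by
    have := mul_le_mul_of_nonneg_left h2 h4.le
    nlinarith
  have h5 : r * s * exp (-(k * l)) ≤ exp (k * l) / 2 := by
    have := mul_le_mul_of_nonneg_right h1 h4.le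
    linarith
  unfold wro
  nlinarith

lemma phi_int {k r a b : ℝ} (hk : k ≠ 0) : ∫ t in a..b, phi k r a t =
    (exp (k * (b - a)) - 1 + r * (1 - exp (-(k * (b - a))))) / k := by
  have hd : ∀ x ∈ uIcc a b, HasDerivAt
      (fun t => (exp (k * (t - a)) - r * exp (-(k * (t - a)))) / k) (phi k r a x) x := by
    intro x _
    refine (((dpos k a x).sub ((dneg k a x).const_mul r)).div_const k).congr_deriv ?_
    unfold phi; field_simp; ring
  have hc : Continuous (phi k r a) := by unfold phi; fun_prop
  rw [intervalIntegral.integral_eq_sub_of_hasDerivAt hd (hc.intervalIntegrable _ _)]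
  simp
  ring

lemma exp_int {k a b : ℝ} (hk : 0 < k) : ∫ t in a..b, exp (-(k * (b - t))) ≤ 1 / k := by
  have hd : ∀ x ∈ uIcc a b, HasDerivAt
      (fun t => exp (-(k * (b - t))) / k) (exp (-(k * (b - x)))) x := by
    intro x _
    refine ((dneg' k b x).div_const k).congr_deriv ?_
    field_simp
  have hc : Continuous (fun t => exp (-(k * (b - t)))) := by fun_prop
  rw [intervalIntegral.integral_eq_sub_of_hasDerivAt hd (hc.intervalIntegrable _ _)]
  simp
  have := exp_pos (-(k * (b - a)))
  positivity

theorem kernel {a b : ℝ} (hab : a < b) {α β : ℝ} (hβ : sin β ≠ 0) :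
    ∃ E : ℝ → ℝ, Tendsto E atTop (𝓝 1) ∧ ∀ᶠ k in atTop, ∃ (W : ℝ) (φ φ1 χ χ1 : ℝ → ℝ),
      Gr a b k α β W φ φ1 χ χ1 ∧ (∀ x ∈ Icc a b, ∀ t ∈ Icc a b, |green W φ χ x t| ≤ 9 / k) ∧
      (∀ t ∈ Icc a b, |green W φ χ b t| ≤ 9 / k * exp (-(k * (b - t)))) ∧
      k ^ 2 * ∫ t in a..b, green W φ χ b t = E k := by
  obtain ⟨r, hr, -⟩ := rlem (sin α) (-cos α) (by rw [neg_sq]; exact sin_sq_add_cos_sq α)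
  obtain ⟨s, hs, hs1⟩ := rlem (sin β) (cos β) (sin_sq_add_cos_sq β)
  have hs1 := hs1 hβ
  have hba : 0 < b - a := sub_pos.2 hab
  have hkl : Tendsto (fun k : ℝ => k * (b - a)) atTop atTop :=
    tendsto_id.atTop_mul_const hba
  have he : Tendsto (fun k : ℝ => exp (-(k * (b - a)))) atTop (𝓝 0) :=
    tendsto_exp_neg_atTop_nhds_zero.comp hkl
  have hbr : IsBoundedUnder (· ≤ ·) atTop (norm ∘ r) :=
    ⟨2, eventually_map.2 (hr.mono fun k h => h.1)⟩
  have hre : Tendsto (fun k => exp (-(k * (b - a))) * r k) atTop (𝓝 0) := he.zero_mul_isBoundedUnder_le hbr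
  refine ⟨fun k => (1 + s k) * (1 - exp (-(k * (b - a))) + exp (-(k * (b - a))) * r k
      - exp (-(k * (b - a))) * (exp (-(k * (b - a))) * r k)) /
      (2 * (1 - s k * (exp (-(k * (b - a))) * (exp (-(k * (b - a))) * r k)))), ?_, ?_⟩
  · have : Tendsto (fun k => (1 + s k) * (1 - exp (-(k * (b - a))) + exp (-(k * (b - a))) * r k
      - exp (-(k * (b - a))) * (exp (-(k * (b - a))) * r k)) /
      (2 * (1 - s k * (exp (-(k * (b - a))) * (exp (-(k * (b - a))) * r k))))) atTop
      (𝓝 ((1 + 1) * (1 - 0 + 0 - 0 * 0) / (2 * (1 - 1 * (0 * 0))))) :=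
      (((hs1.const_add 1).mul (((he.const_sub 1).add hre).sub (he.mul hre))).div
        (((hs1.mul (he.mul hre)).const_sub 1).const_mul 2) (by norm_num))
    convert this using 2
    norm_num
  · filter_upwards [hr, hs, eventually_gt_atTop 0, hkl.eventually (eventually_ge_atTop 2)]
      with k hrk hsk hk hl
    have hW := wro_ge hk hrk.1 hsk.1 hl
    have hW0 : 0 < wro k (r k) (s k) (b - a) := lt_of_lt_of_le (by positivity) hW
    have hb : b ∈ Icc a b := ⟨hab.le, le_rfl⟩
    refine ⟨_, _, _, _, _, gr_mk hW0.ne' hrk.2 hsk.2, ?_, ?_, ?_⟩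
    · intro x hx t ht
      refine (green_le hk hrk.1 hsk.1 hW hx ht).trans ?_
      have : exp (-(k * (max x t - min x t))) ≤ 1 := by
        rw [exp_le_one_iff, neg_nonpos]
        exact mul_nonneg hk.le (sub_nonneg.2 min_le_max)
      exact mul_le_of_le_one_right (by positivity) this
    · intro t ht
      have := green_le hk hrk.1 hsk.1 hW hb ht
      rwa [max_eq_left ht.2, min_eq_right ht.2] at this
    · have e : ∫ t in a..b, green (wro k (r k) (s k) (b - a)) (phi k (r k) a) (chi k (s k) b) b t =
        (1 + s k) / wro k (r k) (s k) (b - a) * ∫ t in a..b, phi k (r k) a t := by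
        rw [← intervalIntegral.integral_const_mul]
        refine intervalIntegral.integral_congr fun t ht => ?_
        rw [uIcc_of_le hab.le] at ht
        simp only [green, max_eq_left ht.2, min_eq_right ht.2, chi]
        simp
        ring
      rw [e, phi_int hk.ne']
      unfold wro at hW0 ⊢
      have hx : exp (-(k * (b - a))) = (exp (k * (b - a)))⁻¹ := exp_neg _
      rw [hx] at hW0 ⊢
      have hX := exp_pos (k * (b - a))
      obtain ⟨X, hXd⟩ : ∃ X, X = exp (k * (b - a)) := ⟨_, rfl⟩
      rw [← hXd] at hX hW0 ⊢
      have hne : X ^ 2 - r k * s k ≠ 0 := by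
        intro h0
        have : X - r k * s k * X⁻¹ = 0 := by field_simp; linarith
        rw [this] at hW0; simp at hW0
      have hne' : X ^ 2 - s k * r k ≠ 0 := by rwa [mul_comm (s k)]
      field_simp
      ring

end SLKer

namespace SLKer
open Set Filter Topology MeasureTheory SLOde Real

lemma int_est {a b k : ℝ} (hab : a < b) (hk : 0 < k) {G g : ℝ → ℝ} (hG : Continuous G)
    (hg : Continuous g) (hGb : ∀ t ∈ Icc a b, |G t| ≤ 9 / k * exp (-(k * (b - t))))
    {ε D : ℝ} (hε : 0 ≤ ε) (hD : 0 ≤ D) (hgb : ∀ t ∈ Icc a b, |g t| ≤ ε + D * (b - t)) :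
    |k ^ 2 * ∫ t in a..b, G t * g t| ≤ 9 * ε + 36 * D / k := by
  have h1 : |∫ t in a..b, G t * g t| ≤ ∫ t in a..b,
      (9 * ε / k * exp (-(k * (b - t))) + 18 * D / k ^ 2 * exp (-(k / 2 * (b - t)))) := by
    refine (intervalIntegral.abs_integral_le_integral_abs hab.le).trans ?_
    refine intervalIntegral.integral_mono_on hab.le ((hG.mul hg).abs.intervalIntegrable _ _)
      ((by fun_prop : Continuous _).intervalIntegrable _ _) ?_
    intro t ht
    rw [abs_mul]
    have hb : 0 ≤ b - t := sub_nonneg.2 ht.2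
    have e1 : k * (b - t) / 2 * exp (-(k * (b - t))) ≤ exp (-(k / 2 * (b - t))) := by
      have h3 := add_one_le_exp (k * (b - t) / 2)
      have h4 : exp (-(k / 2 * (b - t))) = exp (k * (b - t) / 2) * exp (-(k * (b - t))) := by
        rw [← exp_add]; ring_nf
      rw [h4]
      exact mul_le_mul_of_nonneg_right (by linarith) (exp_pos _).le
    calc |G t| * |g t| ≤ (9 / k * exp (-(k * (b - t)))) * (ε + D * (b - t)) :=
          mul_le_mul (hGb t ht) (hgb t ht) (abs_nonneg _) (by positivity)
      _ = 9 * ε / k * exp (-(k * (b - t))) + 18 * D / k ^ 2 *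
          (k * (b - t) / 2 * exp (-(k * (b - t)))) := by field_simp; ring
      _ ≤ _ := by gcongr
  rw [intervalIntegral.integral_add ((by fun_prop : Continuous _).intervalIntegrable _ _)
    ((by fun_prop : Continuous _).intervalIntegrable _ _),
    intervalIntegral.integral_const_mul, intervalIntegral.integral_const_mul] at h1
  have h2 := exp_int (a := a) (b := b) hk
  have h3 := exp_int (a := a) (b := b) (half_pos hk)
  rw [abs_mul, abs_of_pos (by positivity : 0 < k ^ 2)]
  calc _ ≤ k ^ 2 * (9 * ε / k * (1 / k) + 18 * D / k ^ 2 * (1 / (k / 2))) := by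
        refine mul_le_mul_of_nonneg_left (h1.trans ?_) (by positivity)
        gcongr
    _ = _ := by field_simp; ring

lemma mod_cont {a b : ℝ} {f : ℝ → ℝ} (hf : Continuous f) {F : ℝ}
    (hF : ∀ x ∈ Icc a b, |f x| ≤ F) (hab : a < b) {ε : ℝ} (hε : 0 < ε) :
    ∃ D, 0 ≤ D ∧ ∀ t ∈ Icc a b, |f t - f b| ≤ ε + D * (b - t) := by
  have hb : b ∈ Icc a b := ⟨hab.le, le_rfl⟩
  have hF0 : 0 ≤ F := (abs_nonneg _).trans (hF b hb)
  obtain ⟨δ, hδ, h⟩ := Metric.continuousAt_iff.1 (hf.continuousAt (x := b)) ε hε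
  refine ⟨2 * F / δ, by positivity, fun t ht => ?_⟩
  have hbt : 0 ≤ b - t := sub_nonneg.2 ht.2
  by_cases hd : b - t < δ
  · have := h (x := t) (by rw [Real.dist_eq, abs_sub_comm, abs_of_nonneg hbt]; exact hd)
    rw [Real.dist_eq] at this
    have : 0 ≤ 2 * F / δ * (b - t) := by positivity
    linarith
  · push Not at hd
    have h1 : 2 * F ≤ 2 * F / δ * (b - t) := by
      rw [div_mul_eq_mul_div, le_div_iff₀ hδ]
      exact mul_le_mul_of_nonneg_left hd (by positivity)
    have := abs_sub (f t) (f b)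
    linarith [hF t ht, hF b hb]

set_option maxHeartbeats 1000000 in
theorem resolvent_limit {a b : ℝ} (hab : a < b) {q : ℝ → ℝ} (hq : Continuous q) {α β : ℝ}
    (hβ : sin β ≠ 0)
    {lam : ℕ → ℝ} {y : ℕ → ℝ → ℝ}
    (heig : ∀ n, IsSLEigenpair a b q α β (lam n) (y n))
    (hmono : StrictMono lam)
    (hcomplete : ∀ μ z, IsSLEigenpair a b q α β μ z → ∃ n, lam n = μ)
    (hnorm : ∀ n, ∫ x in a..b, (y n x) ^ 2 = 1)
    {f : ℝ → ℝ} (hf : Continuous f) {c : ℕ → ℝ} (hc : ∀ n, c n = ∫ x in a..b, y n x * f x) :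
    (∀ L, ∃ n, L < lam n) ∧ ∃ S : ℝ → ℝ, Tendsto S atTop (𝓝 (f b)) ∧
      ∀ᶠ k in atTop, HasSum (fun n => c n * y n b * (k ^ 2 / (lam n + k ^ 2))) (S k) := by
  obtain ⟨C0, hC0, hres⟩ := SLSpec.resolvent hab hq heig hmono hcomplete hnorm hf hc
  obtain ⟨E, hE, hker⟩ := kernel hab (α := α) hβ
  have hb : b ∈ Icc a b := ⟨hab.le, le_rfl⟩
  have hba : 0 < b - a := sub_pos.2 hab
  obtain ⟨Q, hQ⟩ := isCompact_Icc.exists_bound_of_continuousOn (s := Icc a b) hq.continuousOn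
  obtain ⟨F, hF⟩ := isCompact_Icc.exists_bound_of_continuousOn (s := Icc a b) hf.continuousOn
  simp only [Real.norm_eq_abs] at hQ hF
  have hQ0 : 0 ≤ Q := (abs_nonneg _).trans (hQ b hb)
  have hF0 : 0 ≤ F := (abs_nonneg _).trans (hF b hb)
  have hmain : ∀ᶠ k : ℝ in atTop, (∀ L, ∃ n, L < lam n) ∧ ∃ S : ℝ,
      HasSum (fun n => c n * y n b * (k ^ 2 / (lam n + k ^ 2))) S ∧
      ∀ ε D : ℝ, 0 ≤ ε → 0 ≤ D → (∀ t ∈ Icc a b, |f t - f b| ≤ ε + D * (b - t)) →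
        |S - f b| ≤ |f b| * |E k - 1| + 9 * ε + (36 * D + 9 * Q * (18 * (b - a) * F)) / k := by
    filter_upwards [hker, eventually_gt_atTop 0, eventually_gt_atTop (C0 * 9),
      eventually_ge_atTop (18 * (b - a) * Q)] with k hkk hk hkC hkQ
    obtain ⟨W, φ, φ1, χ, χ1, hG, hg1, hg2, hEk⟩ := hkk
    obtain ⟨hL, hl0, v, hv, hveq, hsum⟩ := hres k W (9 / k) φ φ1 χ χ1 hG (by positivity) hg1
      (by rw [← mul_div_assoc, div_lt_one hk]; exact hkC)
    refine ⟨hL, k ^ 2 * v b, ?_, ?_⟩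
    · have e : (fun n => c n * y n b * (k ^ 2 / (lam n + k ^ 2))) =
          fun n => k ^ 2 * (c n * y n b / (lam n + k ^ 2)) := by
        ext n; ring
      rw [e]
      exact hsum.mul_left (k ^ 2)
    have gc : ∀ x, Continuous fun t => green W φ χ x t := fun x =>
      hG.green_cont.comp (by fun_prop : Continuous fun t => (x, t))
    -- sup bound of v
    obtain ⟨x0, hx0, hmax⟩ := isCompact_Icc.exists_isMaxOn (s := Icc a b) ⟨b, hb⟩
      (f := fun x => |v x|) hv.abs.continuousOn
    have hV : ∀ x ∈ Icc a b, |v x| ≤ |v x0| := fun x hx => hmax hx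
    have hvb : |v x0| ≤ 18 * (b - a) * F / k := by
      have h1 : |v x0| ≤ 9 / k * (F + Q * |v x0|) * |b - a| := by
        conv_lhs => rw [hveq x0 hx0]
        unfold solV
        rw [← Real.norm_eq_abs]
        refine intervalIntegral.norm_integral_le_of_norm_le_const fun t ht => ?_
        rw [uIoc_of_le hab.le] at ht
        have ht' := Ioc_subset_Icc_self ht
        rw [Real.norm_eq_abs, abs_mul]
        refine mul_le_mul (hg1 _ hx0 _ ht') ?_ (abs_nonneg _) (by positivity)
        refine (abs_sub _ _).trans ?_
        rw [abs_mul]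
        exact add_le_add (hF t ht') (mul_le_mul (hQ t ht') (hV t ht') (abs_nonneg _) hQ0)
      rw [abs_of_pos hba] at h1
      have h2 : 9 / k * (F + Q * |v x0|) * (b - a) =
        (9 * (b - a) * F + (9 * (b - a) * Q) * |v x0|) / k := by field_simp
      rw [h2, le_div_iff₀ hk] at h1
      rw [le_div_iff₀ hk]
      nlinarith [abs_nonneg (v x0)]
    intro ε D hε hD hfm
    have e1 : k ^ 2 * v b - f b = f b * (E k - 1) +
        k ^ 2 * (∫ t in a..b, green W φ χ b t * (f t - f b)) -
        k ^ 2 * (∫ t in a..b, green W φ χ b t * (q t * v t)) := by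
      have c0 := gc b
      have e2 : v b = (∫ t in a..b, green W φ χ b t * (f t - f b)) +
          (∫ t in a..b, green W φ χ b t * f b) -
          (∫ t in a..b, green W φ χ b t * (q t * v t)) := by
        rw [← intervalIntegral.integral_add ((by fun_prop : Continuous _).intervalIntegrable _ _)
          ((by fun_prop : Continuous _).intervalIntegrable _ _),
          ← intervalIntegral.integral_sub ((by fun_prop : Continuous _).intervalIntegrable _ _)
          ((by fun_prop : Continuous _).intervalIntegrable _ _), hveq b hb]
        unfold solV
        congr 1; ext t; ring
      rw [intervalIntegral.integral_mul_const] at e2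
      rw [e2, ← hEk]; ring
    have h1 := int_est hab hk (gc b) (hf.sub continuous_const) hg2 hε hD hfm
    have h2 := int_est hab hk (gc b) (hq.mul hv) hg2 (ε := Q * (18 * (b - a) * F / k)) (D := 0)
      (by positivity) le_rfl (by
        intro t ht
        rw [Pi.mul_apply, abs_mul]
        have := mul_le_mul (hQ t ht) ((hV t ht).trans hvb) (abs_nonneg _) hQ0
        linarith)
    simp only [Pi.mul_apply, Pi.sub_apply] at h1 h2
    rw [e1]
    refine (abs_sub _ _).trans ?_
    have h3 := abs_add_le (f b * (E k - 1))
      (k ^ 2 * (∫ t in a..b, green W φ χ b t * (f t - f b)))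
    rw [abs_mul] at h3
    have h4 : (36 * D + 9 * Q * (18 * (b - a) * F)) / k =
      36 * D / k + 9 * (Q * (18 * (b - a) * F / k)) := by field_simp
    rw [h4]
    simp only [mul_zero, zero_div, add_zero] at h2
    linarith
  refine ⟨hmain.exists.choose_spec.1, ?_⟩
  have hch : ∀ k : ℝ, ∃ S : ℝ, (∃ S : ℝ,
      HasSum (fun n => c n * y n b * (k ^ 2 / (lam n + k ^ 2))) S ∧
      ∀ ε D : ℝ, 0 ≤ ε → 0 ≤ D → (∀ t ∈ Icc a b, |f t - f b| ≤ ε + D * (b - t)) →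
        |S - f b| ≤ |f b| * |E k - 1| + 9 * ε + (36 * D + 9 * Q * (18 * (b - a) * F)) / k) →
      (HasSum (fun n => c n * y n b * (k ^ 2 / (lam n + k ^ 2))) S ∧
      ∀ ε D : ℝ, 0 ≤ ε → 0 ≤ D → (∀ t ∈ Icc a b, |f t - f b| ≤ ε + D * (b - t)) →
        |S - f b| ≤ |f b| * |E k - 1| + 9 * ε + (36 * D + 9 * Q * (18 * (b - a) * F)) / k) := by
    intro k
    by_cases h : ∃ S : ℝ,
      HasSum (fun n => c n * y n b * (k ^ 2 / (lam n + k ^ 2))) S ∧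
      ∀ ε D : ℝ, 0 ≤ ε → 0 ≤ D → (∀ t ∈ Icc a b, |f t - f b| ≤ ε + D * (b - t)) →
        |S - f b| ≤ |f b| * |E k - 1| + 9 * ε + (36 * D + 9 * Q * (18 * (b - a) * F)) / k
    · obtain ⟨S, hS⟩ := h; exact ⟨S, fun _ => hS⟩
    · exact ⟨0, fun h' => absurd h' h⟩
  choose S hS using hch
  refine ⟨S, ?_, hmain.mono fun k hk => (hS k hk.2).1⟩
  rw [Metric.tendsto_atTop']
  intro η hη
  obtain ⟨D, hD, hfm⟩ := mod_cont hf hF hab (ε := η / 18) (by positivity)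
  have hlim : Tendsto (fun k : ℝ => |f b| * |E k - 1| + 9 * (η / 18) +
      (36 * D + 9 * Q * (18 * (b - a) * F)) / k) atTop (𝓝 (|f b| * |1 - 1| + 9 * (η / 18) + 0)) :=
    (((hE.sub_const 1).abs.const_mul _).add_const _).add
      (tendsto_const_nhds.div_atTop tendsto_id)
  have hlt := hlim.eventually_lt_const (u := η) (by
    rw [sub_self, abs_zero, mul_zero]; linarith)
  obtain ⟨N, hN⟩ := (hmain.and hlt).exists_forall_of_atTop
  refine ⟨N, fun k hk => ?_⟩
  obtain ⟨h1, h2⟩ := hN k hk.le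
  rw [Real.dist_eq]
  exact ((hS k h1.2).2 _ D (by positivity) hD hfm).trans_lt h2

end SLKer

namespace SLMain
open Set Filter Topology MeasureTheory SLOde

lemma coef_bound {a b : ℝ} (hab : a < b) {q f : ℝ → ℝ} (hq : ContinuousOn q (Icc a b))
    (hf : ContinuousOn f (Icc a b)) (hbv : BoundedVariationOn f (Icc a b)) :
    ∃ C K : ℝ, 1 ≤ K ∧ ∀ κ y y1, K ≤ κ → Sol a b (fun x => q x - κ ^ 2) y y1 →
      ∫ x in a..b, y x ^ 2 = 1 → |(∫ x in a..b, y x * f x) * y b| ≤ C / κ := by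
  have hb : b ∈ Icc a b := ⟨hab.le, le_rfl⟩
  have hba : 0 < b - a := sub_pos.2 hab
  obtain ⟨B, hB⟩ := isCompact_Icc.exists_bound_of_continuousOn (s := Icc a b) hq
  obtain ⟨F, hF⟩ := isCompact_Icc.exists_bound_of_continuousOn (s := Icc a b) hf
  simp only [Real.norm_eq_abs] at hB hF
  have hB0 : 0 ≤ B := (abs_nonneg _).trans (hB b hb)
  have hF0 : 0 ≤ F := (abs_nonneg _).trans (hF b hb)
  obtain ⟨V, hV⟩ : ∃ V, V = 2 * F + (eVariationOn f (Icc a b)).toReal := ⟨_, rfl⟩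
  have hV0 : 0 ≤ V := by rw [hV]; positivity
  obtain ⟨D, hD⟩ : ∃ D, D = √(6 * Real.exp (B * (b - a)) / (b - a)) := ⟨_, rfl⟩
  have hD0 : 0 ≤ D := by rw [hD]; positivity
  have hD2 : 6 * Real.exp (B * (b - a)) / (b - a) = D ^ 2 := by
    rw [hD, Real.sq_sqrt (by positivity)]
  refine ⟨D * (B * F * (b - a) + V) * D,
    max 1 (max B (2 * Real.exp (B * (b - a)) / (b - a))), le_max_left _ _, ?_⟩
  intro κ y y1 hκ h hn
  have h1 : 1 ≤ κ := (le_max_left _ _).trans hκ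
  have h2 : B ≤ κ := (le_max_left _ _).trans ((le_max_right _ _).trans hκ)
  have h3 : 2 * Real.exp (B * (b - a)) / (b - a) ≤ κ :=
    (le_max_right _ _).trans ((le_max_right _ _).trans hκ)
  have hκ0 : 0 < κ := by linarith
  have hen : ∀ x ∈ Icc a b, y x ^ 2 + (y1 x / κ) ^ 2 ≤ D ^ 2 := by
    intro x hx
    have := energy_bound hab h hq hB h1 h2 h3 hx
    rwa [hn, mul_one, hD2] at this
  have hy : ∀ x ∈ Icc a b, |y x| ≤ D := fun x hx =>
    abs_le_of_sq_le_sq (by nlinarith [hen x hx, sq_nonneg (y1 x / κ)]) hD0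
  have hy1 : ∀ x ∈ Icc a b, |y1 x| ≤ D * κ := fun x hx => by
    have h5 : |y1 x / κ| ≤ D :=
      abs_le_of_sq_le_sq (by nlinarith [hen x hx, sq_nonneg (y x)]) hD0
    rwa [abs_div, abs_of_pos hκ0, div_le_iff₀ hκ0] at h5
  have cy := h.cont
  have hbvb := bv_bound hab hf hbv (fun x hx => (h x hx).2) (by fun_prop) hy1 hF
  rw [← hV] at hbvb
  have hqyf : |∫ x in a..b, q x * y x * f x| ≤ B * D * F * |b - a| := by
    rw [← Real.norm_eq_abs]
    refine intervalIntegral.norm_integral_le_of_norm_le_const fun t ht => ?_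
    rw [uIoc_of_le hab.le] at ht
    have ht' := Ioc_subset_Icc_self ht
    rw [Real.norm_eq_abs, abs_mul, abs_mul]
    have e1 := hB t ht'
    have e2 := hy t ht'
    have e3 := hF t ht'
    gcongr
  rw [abs_of_pos hba] at hqyf
  have e : κ ^ 2 * ∫ x in a..b, y x * f x = (∫ x in a..b, q x * y x * f x) -
      ∫ x in a..b, (q x - κ ^ 2) * y x * f x := by
    rw [← intervalIntegral.integral_const_mul, ← intervalIntegral.integral_sub]
    · congr 1; ext x; ring
    · apply ContinuousOn.intervalIntegrable_of_Icc hab.le; fun_prop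
    · apply ContinuousOn.intervalIntegrable_of_Icc hab.le; fun_prop
  have h6 : κ ^ 2 * |∫ x in a..b, y x * f x| ≤ B * D * F * (b - a) + D * κ * V := by
    rw [← abs_of_pos (by positivity : 0 < κ ^ 2), ← abs_mul, e]
    exact (abs_sub _ _).trans (add_le_add hqyf hbvb)
  have h7 : κ * |∫ x in a..b, y x * f x| ≤ D * (B * F * (b - a) + V) := by
    have h8 : 0 ≤ B * D * F * (b - a) := by positivity
    have : κ * (κ * |∫ x in a..b, y x * f x|) ≤ κ * (D * (B * F * (b - a) + V)) := by nlinarith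
    exact le_of_mul_le_mul_left this hκ0
  rw [abs_mul, le_div_iff₀ hκ0]
  have := mul_le_mul h7 (hy b hb) (abs_nonneg _) (by positivity)
  linarith

lemma eig_congr {a b : ℝ} {q q' : ℝ → ℝ} (h : ∀ x ∈ Icc a b, q x = q' x) {α β l : ℝ} {y : ℝ → ℝ}
    (he : IsSLEigenpair a b q α β l y) : IsSLEigenpair a b q' α β l y := by
  obtain ⟨y1, y2, h1, h2, h3, h4, h5, h6⟩ := he
  exact ⟨y1, y2, h1, h2, h3, h4, fun x hx => by rw [← h x hx]; exact h5 x hx, h6⟩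

lemma exists_ext {a b : ℝ} (hab : a < b) {q : ℝ → ℝ} (hq : ContinuousOn q (Icc a b)) :
    ∃ q' : ℝ → ℝ, Continuous q' ∧ ∀ x ∈ Icc a b, q x = q' x :=
  ⟨IccExtend hab.le ((Icc a b).restrict q),
    (continuousOn_iff_continuous_restrict.1 hq).Icc_extend', fun x hx => by
      rw [IccExtend_of_mem _ _ hx]; rfl⟩

theorem main_ne {a b : ℝ} (hab : a < b)
    {q : ℝ → ℝ} (hq : ContinuousOn q (Set.Icc a b))
    {α β : ℝ} (hβ : Real.sin β ≠ 0)
    {lam : ℕ → ℝ} {y : ℕ → ℝ → ℝ}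
    (heig : ∀ n, IsSLEigenpair a b q α β (lam n) (y n))
    (hmono : StrictMono lam)
    (hcomplete : ∀ μ z, IsSLEigenpair a b q α β μ z → ∃ n, lam n = μ)
    (hnorm : ∀ n, ∫ x in a..b, (y n x) ^ 2 = 1)
    {f : ℝ → ℝ} (hf : ContinuousOn f (Set.Icc a b))
    (hbv : BoundedVariationOn f (Set.Icc a b))
    {c : ℕ → ℝ} (hc : ∀ n, c n = ∫ x in a..b, y n x * f x) :
    Tendsto (fun N : ℕ => ∑ n ∈ Finset.range N, c n * y n b) atTop (𝓝 (f b)) := by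
  have hb : b ∈ Icc a b := ⟨hab.le, le_rfl⟩
  obtain ⟨q', hq'c, hq'⟩ := exists_ext hab hq
  obtain ⟨f', hf'c, hf'⟩ := exists_ext hab hf
  obtain ⟨hunb, S, hS, hsum⟩ := SLKer.resolvent_limit hab hq'c hβ
    (fun n => eig_congr hq' (heig n)) hmono
    (fun μ z hz => hcomplete μ z (eig_congr (fun x hx => (hq' x hx).symm) hz)) hnorm hf'c
    (c := c) (fun n => by
      rw [hc n]
      refine intervalIntegral.integral_congr fun x hx => ?_
      rw [uIcc_of_le hab.le] at hx
      simp only [hf' x hx])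
  rw [← hf' b hb] at hS
  obtain ⟨C, K, hK, hcoef⟩ := coef_bound hab hq hf hbv
  obtain ⟨g, hg, K', hK', hgap⟩ := gap hab hq α
  obtain ⟨K2, hK2⟩ : ∃ K2, K2 = max K K' := ⟨_, rfl⟩
  have hK2a : K ≤ K2 := hK2 ▸ le_max_left _ _
  have hK2b : K' ≤ K2 := hK2 ▸ le_max_right _ _
  obtain ⟨n0, hn0⟩ := hunb (K2 ^ 2)
  obtain ⟨k, hk⟩ : ∃ k : ℕ → ℝ, ∀ j, k j = √(lam (j + n0)) := ⟨_, fun _ => rfl⟩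
  have hlam : ∀ j, K2 ^ 2 < lam (j + n0) := fun j =>
    hn0.trans_le (hmono.monotone (Nat.le_add_left _ _))
  have hk2 : ∀ j, k j ^ 2 = lam (j + n0) := fun j => by
    rw [hk, Real.sq_sqrt ((sq_nonneg K2).trans (hlam j).le)]
  have hkK : ∀ j, K2 ≤ k j := fun j => by
    rw [hk]; exact Real.le_sqrt_of_sq_le (hlam j).le
  choose y1 hsol hne hbca hbcb using fun n => SLSpec.eig_sol (heig n)
  have hsol' : ∀ j, Sol a b (fun x => q x - k j ^ 2) (y (j + n0)) (y1 (j + n0)) := fun j => by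
    rw [hk2]; exact hsol _
  have key : Tendsto (fun N => ∑ j ∈ Finset.range N, c (j + n0) * y (j + n0) b) atTop
      (𝓝 (f b - ∑ n ∈ Finset.range n0, c n * y n b)) := by
    refine SLTauber.tauber (k := k) (C := C) (c := min g 1) (lt_min hg one_pos) ?_ ?_ ?_ ?_
    · exact (min_le_right _ _).trans (hK.trans (hK2a.trans (hkK 0)))
    · intro j
      have h1 := hgap (k j) (k (j + 1)) (hK2b.trans (hkK _)) (hK2b.trans (hkK _)) _ _ _ _
        (hsol' j) (hsol' (j + 1)) (hbca _) (hbca _) (hne _) (hne _)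
        (SLSpec.eig_orth hab hq (heig _) (heig _) (fun e => by
          have := hmono.injective e
          omega))
      have h2 : k j ≤ k (j + 1) := by
        rw [hk, hk]; exact Real.sqrt_le_sqrt (hmono.monotone (by omega))
      rw [abs_sub_comm, abs_of_nonneg (sub_nonneg.2 h2)] at h1
      have := min_le_left g 1
      linarith
    · intro j
      rw [hc]
      exact hcoef (k j) _ _ (hK2a.trans (hkK j)) (hsol' j) (hnorm _)
    · have hfin : Tendsto (fun κ : ℝ => ∑ n ∈ Finset.range n0,
          c n * y n b * (κ ^ 2 / (lam n + κ ^ 2))) atTop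
          (𝓝 (∑ n ∈ Finset.range n0, c n * y n b)) := by
        refine tendsto_finset_sum _ fun n _ => ?_
        have h1 : Tendsto (fun κ : ℝ => lam n + κ ^ 2) atTop atTop :=
          tendsto_atTop_add_const_left _ _ (tendsto_pow_atTop two_ne_zero)
        have h2 : Tendsto (fun κ : ℝ => 1 - lam n / (lam n + κ ^ 2)) atTop (𝓝 1) := by
          simpa using (tendsto_const_nhds (x := (1 : ℝ))).sub
            ((tendsto_const_nhds (x := lam n)).div_atTop h1)
        have h3 : Tendsto (fun κ : ℝ => κ ^ 2 / (lam n + κ ^ 2)) atTop (𝓝 1) := by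
          refine h2.congr' ?_
          filter_upwards [h1.eventually (eventually_gt_atTop 0)] with κ hκ
          field_simp
          ring
        simpa using h3.const_mul (c n * y n b)
      refine (hS.sub hfin).congr' ?_
      filter_upwards [hsum] with κ hκ
      have h1 := (hasSum_nat_add_iff' n0).2 hκ
      rw [← h1.tsum_eq]
      simp only [hk2]
  have h2 := key.const_add (∑ n ∈ Finset.range n0, c n * y n b)
  rw [add_sub_cancel] at h2
  rw [← tendsto_add_atTop_iff_nat n0]
  refine h2.congr fun N => ?_
  rw [add_comm N n0, Finset.sum_range_add]
  simp only [add_comm]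

end SLMain

theorem sl_expansion_right_endpoint
    (a b : ℝ) (hab : a < b)
    (q : ℝ → ℝ) (hq : ContinuousOn q (Set.Icc a b))
    (α β : ℝ) (hα : α ∈ Set.Ico 0 (2 * Real.pi)) (hβ : β ∈ Set.Ico 0 (2 * Real.pi))
    (lam : ℕ → ℝ) (y : ℕ → ℝ → ℝ)
    (heig : ∀ n, IsSLEigenpair a b q α β (lam n) (y n))
    (hmono : StrictMono lam)
    (hcomplete : ∀ μ z, IsSLEigenpair a b q α β μ z → ∃ n, lam n = μ)
    (hnorm : ∀ n, ∫ x in a..b, (y n x) ^ 2 = 1)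
    (f : ℝ → ℝ) (hf : ContinuousOn f (Set.Icc a b))
    (hbv : BoundedVariationOn f (Set.Icc a b))
    (c : ℕ → ℝ) (hc : ∀ n, c n = ∫ x in a..b, y n x * f x) :
    Filter.Tendsto (fun N : ℕ => ∑ n ∈ Finset.range N, c n * y n b)
      Filter.atTop (nhds (if Real.sin β ≠ 0 then f b else 0)) := by
  by_cases h : Real.sin β = 0
  · rw [if_neg (by simpa using h)]
    have h0 : ∀ n, y n b = 0 := by
      intro n
      obtain ⟨y1, y2, -, -, -, -, -, -, h7⟩ := heig n
      rw [h, mul_zero, add_zero] at h7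
      refine (mul_eq_zero.1 h7).resolve_right fun hcos => ?_
      have := Real.sin_sq_add_cos_sq β
      rw [h, hcos] at this
      norm_num at this
    simp [h0]
  · rw [if_pos h]
    exact SLMain.main_ne hab hq h heig hmono hcomplete hnorm hf hbv hc
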